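/- arXiv:1008.0550 — 2 statements merged into one kernel-verified Lean document; each statement's English description precedes it below -/
import Mathlib

section
/- Let 0<u_-<u_+<1 with u_-+u_+=1. The sequence of functionals {G_ℓ}_{ℓ>0} Γ-converges to G on X as ℓ→∞, and the unique minimizer (ū_ℓ, φ̄_ℓ) of G_ℓ converges in X to (ū, φ̄) as ℓ→∞. -/
/-!
Write `a = φ₊ = -φ₋` (the symmetry `u₋ + u₊ = 1`). The energy density splits as
`excess a u φ + S φ'`, where `excess ≥ 0` on `[0,1] × [-a,a]` and vanishes only at the two boundary
states, while the entropy `S φ'` is nonpositive. Two facts make the nonpositive term harmless.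

*Calibration.* Minimising `excess` over `u` gives a potential `pot a φ ≥ 2 c (a² - φ²)` with
`c = cst a` (`pot_ge`). Fenchel's inequality `S p ≥ p q - log (1 + e^q)` (`S_dual`) applied with
`q = log (c (a² - φ²))` turns `p q` into an exact derivative, so on every interval the energy is
at least a boundary term, given by the primitive `prim`, plus half of the integral of `excess`
(`entropy_lower`, `energy_lower`). Since `prim` is bounded on `[-a,a]`, the window energies of a
pair are bounded above iff `excess` is integrable, and this in turn is equivalent to membership in
the domain of `G` (`Dom.integrable_excess`, `dom_of_integrable_excess`). On that domain the entropy
is integrable too (`Dom.integrable_S`).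

*Lower bound* (`gamma_liminf`). In a fixed window `(-M, M)` the energy is lower semicontinuous:
`S` is convex and both `u` and `φ'` converge weakly (`entropy_lsc`, `deriv_weak_conv`,
`energy_lsc`). Outside the window the calibration bounds the energy below by
`prim` differences that vanish as `M → ∞` because `φ → ±a`; off the domain of `G` the window
energies themselves are unbounded (`exists_window`).

*Upper bound* (`gamma_limsup`). The recovery sequence keeps `u` inside `(-l, l)` and truncates `φ`
by slope-one ramps starting at `(-l, -a)` and `(l, a)` (`trunc`, `cut`). It differs from `φ` only
in two layers of width `2a`, by an amount tending to zero, and there the entropy only helps.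

*Stationary solutions* (`minimizers_conv`). With `v = u - 1/2` the stationary equation is the
Riccati equation `v' = κ - v²`. The function `κ - v²` solves a linear equation, so it has a sign;
integrating gives `v = k tanh (k x)`, and the boundary condition forces `k` to be exponentially
close to `u₊ - 1/2` (`riccati_tanh`), whence uniform convergence.
-/

open MeasureTheory Real Filter Topology Set
open scoped Classical

noncomputable section

/-- Bernoulli entropy `s(p) = p log p + (1-p) log (1-p)` (with `0 log 0 = 0`). -/
def S (p : ℝ) : ℝ := p * Real.log p + (1 - p) * Real.log (1 - p)

/-- The integrand `g(u,φ,p) = s(u) + s(p) + (1-u)φ - log(1+e^φ)`. -/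
def gg (u φ p : ℝ) : ℝ := S u + S p + (1 - u) * φ - Real.log (1 + Real.exp φ)

/-- The chemical potential `s'(v) = log (v/(1-v))`. -/
def phiOf (v : ℝ) : ℝ := Real.log (v / (1 - v))

/-- The step function `θ_{a₋,a₊}`. -/
def theta (am ap x : ℝ) : ℝ := if x < 0 then am else ap

/-- Translation by `z`: `(τ_z f)(x) = f(x-z)`. -/
def tau (z : ℝ) (f : ℝ → ℝ) : ℝ → ℝ := fun x => f (x - z)

/-- Membership in `L^∞(ℝ;[0,1])`. -/
def MemU (u : ℝ → ℝ) : Prop := Measurable u ∧ ∀ x, u x ∈ Icc (0:ℝ) 1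

/-- Membership in `L^∞(ℝ₊;[0,1])`. -/
def MemUplus (u : ℝ → ℝ) : Prop := Measurable u ∧ ∀ x, 0 ≤ x → u x ∈ Icc (0:ℝ) 1

/-- The class `C`: absolutely continuous with `0 ≤ φ' ≤ 1` a.e. (equivalently nondecreasing
and 1-Lipschitz) with limits `pm` at `-∞` and `pp` at `+∞`. -/
def MemC (pm pp : ℝ) (φ : ℝ → ℝ) : Prop :=
  (∀ x y : ℝ, x ≤ y → φ x ≤ φ y ∧ φ y - φ x ≤ y - x) ∧
  Tendsto φ atBot (𝓝 pm) ∧ Tendsto φ atTop (𝓝 pp)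

/-- The class `C⁺` on the half line. -/
def MemCplus (pm pp : ℝ) (φ : ℝ → ℝ) : Prop :=
  (∀ x y : ℝ, 0 ≤ x → x ≤ y → φ x ≤ φ y ∧ φ y - φ x ≤ y - x) ∧
  φ 0 = pm ∧ Tendsto φ atTop (𝓝 pp)

/-- Membership in `X = L^∞(ℝ;[0,1]) × C`. -/
def MemX (um up : ℝ) (u φ : ℝ → ℝ) : Prop := MemU u ∧ MemC (phiOf um) (phiOf up) φ

/-- Membership in `X⁺ = L^∞(ℝ₊;[0,1]) × C⁺`. -/
def MemXplus (um up : ℝ) (u φ : ℝ → ℝ) : Prop :=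
  MemUplus u ∧ MemCplus (phiOf um) (phiOf up) φ

/-- The finite volume functional `G_ℓ` on the symmetric interval `(-ℓ,ℓ)`. -/
def Gl (um up l : ℝ) (u φ : ℝ → ℝ) : EReal :=
  if (∀ x ≤ -l, u x = um ∧ φ x = phiOf um) ∧ (∀ x, l ≤ x → u x = up ∧ φ x = phiOf up) then
    (↑(∫ x in Ioo (-l) l, (gg (u x) (φ x) (deriv φ x) - gg up (phiOf up) 0)) : EReal)
  else ⊤

/-- The finite volume functional `G_ℓ⁺` on `(0,ℓ)`. -/
def Glplus (um up l : ℝ) (u φ : ℝ → ℝ) : EReal :=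
  if (∀ x, l ≤ x → u x = up ∧ φ x = phiOf up) then
    (↑(∫ x in Ioo (0:ℝ) l, (gg (u x) (φ x) (deriv φ x) - gg up (phiOf up) 0)) : EReal)
  else ⊤

/-- The infinite volume functional `G` on the whole line, `+∞` off its domain `D`. -/
def GE (um up : ℝ) (u φ : ℝ → ℝ) : EReal :=
  if Integrable (fun x => (u x - theta um up x)^2) volume ∧
      Integrable (fun x => φ x - theta (phiOf um) (phiOf up) x) volume then
    (↑(∫ x, (gg (u x) (φ x) (deriv φ x) - gg up (phiOf up) 0)) : EReal)
  else ⊤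

/-- The infinite volume functional `G⁺` on the half line, `+∞` off its domain `D⁺`. -/
def GEplus (um up : ℝ) (u φ : ℝ → ℝ) : EReal :=
  if IntegrableOn (fun x => (u x - up)^2) (Ioi 0) volume ∧
      IntegrableOn (fun x => φ x - phiOf up) (Ioi 0) volume then
    (↑(∫ x in Ioi (0:ℝ), (gg (u x) (φ x) (deriv φ x) - gg up (phiOf up) 0)) : EReal)
  else ⊤

/-- Convergence of sequences in `X`: weak* in `L^∞(ℝ;[0,1])` and uniform for `φ`. -/
def ConvX (un φn : ℕ → ℝ → ℝ) (u φ : ℝ → ℝ) : Prop :=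
  (∀ f : ℝ → ℝ, Integrable f volume →
    Tendsto (fun n => ∫ x, un n x * f x) atTop (𝓝 (∫ x, u x * f x))) ∧
  TendstoUniformly φn φ atTop

/-- Convergence of families indexed by `ℓ → ∞` in `X`. -/
def ConvXFam (U Φ : ℝ → ℝ → ℝ) (u φ : ℝ → ℝ) : Prop :=
  (∀ f : ℝ → ℝ, Integrable f volume →
    Tendsto (fun l => ∫ x, U l x * f x) atTop (𝓝 (∫ x, u x * f x))) ∧
  TendstoUniformly Φ φ atTop

/-- Convergence of sequences in `X⁺`. -/
def ConvXplus (un φn : ℕ → ℝ → ℝ) (u φ : ℝ → ℝ) : Prop :=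
  (∀ f : ℝ → ℝ, IntegrableOn f (Ioi 0) volume →
    Tendsto (fun n => ∫ x in Ioi (0:ℝ), un n x * f x) atTop
      (𝓝 (∫ x in Ioi (0:ℝ), u x * f x))) ∧
  TendstoUniformlyOn φn φ atTop (Ici 0)

/-- Convergence of families indexed by `ℓ → ∞` in `X⁺`. -/
def ConvXplusFam (U Φ : ℝ → ℝ → ℝ) (u φ : ℝ → ℝ) : Prop :=
  (∀ f : ℝ → ℝ, IntegrableOn f (Ioi 0) volume →
    Tendsto (fun l => ∫ x in Ioi (0:ℝ), U l x * f x) atTop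
      (𝓝 (∫ x in Ioi (0:ℝ), u x * f x))) ∧
  TendstoUniformlyOn Φ φ atTop (Ici 0)

/-- The standing wave `ū(x) = 1/2 + (u₊ - 1/2) tanh((u₊ - 1/2) x)`. -/
def ubarStanding (up : ℝ) (x : ℝ) : ℝ :=
  1/2 + (up - 1/2) * Real.tanh ((up - 1/2) * x)


/-! ### The entropy `S` -/

lemma S_eq_neg_binEntropy (p : ℝ) : S p = -Real.binEntropy p := by
  unfold S Real.binEntropy
  rw [Real.log_inv, Real.log_inv]
  ring

lemma continuous_S : Continuous S := by
  rw [show S = fun p => -Real.binEntropy p from funext S_eq_neg_binEntropy]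
  exact Real.binEntropy_continuous.neg

lemma S_nonpos {p : ℝ} (h : p ∈ Icc (0:ℝ) 1) : S p ≤ 0 := by
  rw [S_eq_neg_binEntropy]
  linarith [Real.binEntropy_nonneg h.1 h.2]

lemma neg_log_two_le_S (p : ℝ) : -Real.log 2 ≤ S p := by
  rw [S_eq_neg_binEntropy]
  linarith [Real.binEntropy_le_log_two (p := p)]

lemma S_zero : S 0 = 0 := by simp [S]

/-- `u log (v / u) ≤ 2 (√(u v) - u)`, from `log x ≤ x - 1` at `x = √(v / u)`. -/
lemma mul_log_sub_le {u v : ℝ} (hu : 0 ≤ u) (hv : 0 < v) :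
    u * Real.log v - u * Real.log u ≤ 2 * (Real.sqrt u * Real.sqrt v - u) := by
  rcases hu.eq_or_lt with rfl | hu
  · simp
  have h := Real.log_le_sub_one_of_pos (div_pos (Real.sqrt_pos.2 hv) (Real.sqrt_pos.2 hu))
  rw [Real.log_div (Real.sqrt_pos.2 hv).ne' (Real.sqrt_pos.2 hu).ne', Real.log_sqrt hv.le,
    Real.log_sqrt hu.le] at h
  have h2 : u * (Real.sqrt v / Real.sqrt u) = Real.sqrt u * Real.sqrt v := by
    have := Real.sqrt_pos.2 hu
    field_simp
    rw [Real.sq_sqrt hu.le]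
  have h3 := mul_le_mul_of_nonneg_left h hu.le
  linarith

/-- A Pinsker-type bound: the relative entropy of two Bernoulli laws controls the squared
difference of their parameters. It is proved through the Hellinger distance. -/
lemma S_ge_tangent {u v : ℝ} (hu : u ∈ Icc (0:ℝ) 1) (hv : v ∈ Ioo (0:ℝ) 1) :
    u * Real.log v + (1 - u) * Real.log (1 - v) + (u - v) ^ 2 / 4 ≤ S u := by
  have h1 := mul_log_sub_le hu.1 hv.1
  have h2 := mul_log_sub_le (u := 1 - u) (v := 1 - v) (by linarith [hu.2]) (by linarith [hv.2])
  unfold S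
  have a1 := Real.sq_sqrt hu.1
  have a2 := Real.sq_sqrt hv.1.le
  have a3 := Real.sq_sqrt (show 0 ≤ 1 - u by linarith [hu.2])
  have a4 := Real.sq_sqrt (show 0 ≤ 1 - v by linarith [hv.2])
  have s1 : Real.sqrt u ≤ 1 := Real.sqrt_le_one.2 hu.2
  have s2 : Real.sqrt v ≤ 1 := Real.sqrt_le_one.2 hv.2.le
  have key : (u - v) ^ 2 / 4 ≤ (Real.sqrt u - Real.sqrt v) ^ 2 := by
    have e : (u - v) ^ 2 = (Real.sqrt u - Real.sqrt v) ^ 2 * (Real.sqrt u + Real.sqrt v) ^ 2 := by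
      nth_rewrite 1 [← a1, ← a2]; ring
    have : (Real.sqrt u + Real.sqrt v) ^ 2 ≤ 4 := by
      nlinarith [Real.sqrt_nonneg u, Real.sqrt_nonneg v]
    rw [e]
    nlinarith [sq_nonneg (Real.sqrt u - Real.sqrt v)]
  nlinarith [sq_nonneg (Real.sqrt (1 - u) - Real.sqrt (1 - v))]

/-- The relative entropy of two Bernoulli laws is at most their `χ²` distance. -/
lemma S_le_tangent {u v : ℝ} (hu : u ∈ Icc (0:ℝ) 1) (hv : v ∈ Ioo (0:ℝ) 1) :
    S u ≤ u * Real.log v + (1 - u) * Real.log (1 - v) + (u - v) ^ 2 / (v * (1 - v)) := by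
  have aux : ∀ x y : ℝ, 0 ≤ x → 0 < y → x * Real.log x ≤ x * Real.log y + x * (x / y - 1) := by
    intro x y hx hy
    rcases hx.eq_or_lt with rfl | hx
    · simp
    have h := Real.log_le_sub_one_of_pos (div_pos hx hy)
    rw [Real.log_div hx.ne' hy.ne'] at h
    nlinarith [mul_le_mul_of_nonneg_left h hx.le]
  have hv1 : 0 < 1 - v := by linarith [hv.2]
  have hv0 := hv.1
  have h1 := aux u v hu.1 hv.1
  have h2 := aux (1 - u) (1 - v) (by linarith [hu.2]) hv1
  have e : u * (u / v - 1) + (1 - u) * ((1 - u) / (1 - v) - 1) = (u - v) ^ 2 / (v * (1 - v)) := by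
    field_simp
    ring
  unfold S
  linarith

/-- Fenchel's inequality for the entropy and its conjugate `q ↦ log (1 + e^q)`. -/
lemma S_dual {p : ℝ} (hp : p ∈ Icc (0:ℝ) 1) (q : ℝ) :
    p * q - Real.log (1 + Real.exp q) ≤ S p := by
  have hq := Real.exp_pos q
  have hv : Real.exp q / (1 + Real.exp q) ∈ Ioo (0:ℝ) 1 :=
    ⟨by positivity, by rw [div_lt_one (by positivity)]; linarith⟩
  have h := S_ge_tangent hp hv
  have e1 : 1 - Real.exp q / (1 + Real.exp q) = 1 / (1 + Real.exp q) := by field_simp; ring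
  rw [e1, Real.log_div hq.ne' (by positivity), Real.log_exp,
    Real.log_div one_ne_zero (by positivity), Real.log_one] at h
  nlinarith [sq_nonneg (p - Real.exp q / (1 + Real.exp q))]

/-- The tangent to `S` at a point `w` slightly contracted towards `1/2` nearly touches `S` at
`p`, uniformly in `p`, although `S'` blows up at the endpoints. -/
lemma S_tangent_near {p d : ℝ} (hp : p ∈ Icc (0:ℝ) 1) (hd0 : 0 < d) (hd : d < 1 / 2) :
    S p + Real.log (1 - 2 * d) ≤ p * Real.log ((1 - 2 * d) * p + d) +
      (1 - p) * Real.log (1 - ((1 - 2 * d) * p + d)) := by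
  have aux : ∀ x y : ℝ, 0 ≤ x → (1 - 2 * d) * x ≤ y →
      x * Real.log x + x * Real.log (1 - 2 * d) ≤ x * Real.log y := by
    intro x y hx hxy
    rcases hx.eq_or_lt with rfl | hx
    · simp
    have hc : 0 < 1 - 2 * d := by linarith
    have := Real.log_le_log (mul_pos hc hx) hxy
    rw [Real.log_mul hc.ne' hx.ne'] at this
    nlinarith [mul_le_mul_of_nonneg_left this hx.le]
  have h1 := aux p ((1 - 2 * d) * p + d) hp.1 (by linarith)
  have h2 := aux (1 - p) (1 - ((1 - 2 * d) * p + d)) (by linarith [hp.2]) (by nlinarith)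
  unfold S
  nlinarith

/-! ### Pointwise bounds on the integrand -/

/-- The part of `g(u,φ,p) - g(u₊,φ₊,0)` that does not depend on `p`, written in terms of
`a = φ₊ = -φ₋`. -/
def excess (a u φ : ℝ) : ℝ :=
  S u + (1 - u) * φ - Real.log (1 + Real.exp φ) + Real.log (2 + 2 * Real.cosh a)

/-- The minimum of `excess a u φ` over `u ∈ [0,1]`: a concave double-zero potential vanishing
exactly at `φ = ± a`. -/
def pot (a φ : ℝ) : ℝ := φ - 2 * Real.log (1 + Real.exp φ) + Real.log (2 + 2 * Real.cosh a)

lemma pot_le_excess (a φ : ℝ) {u : ℝ} (hu : u ∈ Icc (0:ℝ) 1) : pot a φ ≤ excess a u φ := by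
  have := S_dual hu φ
  unfold pot excess
  linarith

lemma cosh_sub_cosh_ge {a φ : ℝ} (h : φ ∈ Icc (-a) a) :
    (a ^ 2 - φ ^ 2) / 2 ≤ Real.cosh a - Real.cosh φ := by
  have e1 : a = (a + φ) / 2 + (a - φ) / 2 := by ring
  have e2 : φ = (a + φ) / 2 - (a - φ) / 2 := by ring
  have h1 : (a + φ) / 2 ≤ Real.sinh ((a + φ) / 2) :=
    Real.self_le_sinh_iff.2 (by linarith [h.1])
  have h2 : (a - φ) / 2 ≤ Real.sinh ((a - φ) / 2) :=
    Real.self_le_sinh_iff.2 (by linarith [h.2])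
  have : Real.cosh a - Real.cosh φ = 2 * (Real.sinh ((a + φ) / 2) * Real.sinh ((a - φ) / 2)) := by
    have c1 := Real.cosh_add ((a + φ) / 2) ((a - φ) / 2)
    have c2 := Real.cosh_sub ((a + φ) / 2) ((a - φ) / 2)
    rw [← e1] at c1
    rw [← e2] at c2
    linarith
  rw [this]
  have := mul_le_mul h1 h2 (by linarith [h.2]) (by linarith [h.1])
  nlinarith

/-- The constant in the lower bound `2 c (a² - φ²) ≤ pot a φ`. -/
def cst (a : ℝ) : ℝ := 1 / (4 * (1 + Real.cosh a))

lemma cst_pos (a : ℝ) : 0 < cst a := by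
  unfold cst
  have := Real.cosh_pos a
  positivity

lemma pot_ge {a φ : ℝ} (h : φ ∈ Icc (-a) a) : 2 * cst a * (a ^ 2 - φ ^ 2) ≤ pot a φ := by
  have hc := Real.cosh_pos a
  have hp := Real.cosh_pos φ
  -- `(1 + e^φ)² = e^φ (2 + 2 cosh φ)` turns the potential into a single logarithm.
  have e : pot a φ = -Real.log ((1 + Real.cosh φ) / (1 + Real.cosh a)) := by
    have h1 : (1 + Real.exp φ) ^ 2 = Real.exp φ * (2 * (1 + Real.cosh φ)) := by
      rw [Real.cosh_eq]
      have : Real.exp φ * Real.exp (-φ) = 1 := by rw [← Real.exp_add]; simp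
      nlinarith
    have h2 : 2 * Real.log (1 + Real.exp φ) = φ + Real.log (2 * (1 + Real.cosh φ)) := by
      have := congrArg Real.log h1
      rw [Real.log_pow, Real.log_mul (Real.exp_pos _).ne' (by positivity), Real.log_exp] at this
      exact_mod_cast this
    unfold pot
    rw [h2, Real.log_div (by positivity) (by positivity), Real.log_mul two_ne_zero (by positivity),
      show 2 + 2 * Real.cosh a = 2 * (1 + Real.cosh a) by ring,
      Real.log_mul two_ne_zero (by positivity)]
    ring
  have hl := Real.log_le_sub_one_of_pos
    (show 0 < (1 + Real.cosh φ) / (1 + Real.cosh a) by positivity)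
  have hh := cosh_sub_cosh_ge h
  have : 2 * cst a * (a ^ 2 - φ ^ 2) ≤ 1 - (1 + Real.cosh φ) / (1 + Real.cosh a) := by
    unfold cst
    rw [← sub_nonneg]
    have e2 : 1 - (1 + Real.cosh φ) / (1 + Real.cosh a) -
        2 * (1 / (4 * (1 + Real.cosh a))) * (a ^ 2 - φ ^ 2)
        = (Real.cosh a - Real.cosh φ - (a ^ 2 - φ ^ 2) / 2) / (1 + Real.cosh a) := by
      field_simp; ring
    rw [e2]
    exact div_nonneg (by linarith) (by positivity)
  rw [e]; linarith

lemma pot_nonneg {a φ : ℝ} (h : φ ∈ Icc (-a) a) : 0 ≤ pot a φ := by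
  refine le_trans ?_ (pot_ge h)
  have := cst_pos a
  have : 0 ≤ a ^ 2 - φ ^ 2 := by nlinarith [h.1, h.2]
  positivity

lemma excess_nonneg {a φ u : ℝ} (h : φ ∈ Icc (-a) a) (hu : u ∈ Icc (0:ℝ) 1) :
    0 ≤ excess a u φ := (pot_nonneg h).trans (pot_le_excess a φ hu)

lemma log_one_add_exp_sub {x y : ℝ} (h : x ≤ y) :
    0 ≤ Real.log (1 + Real.exp y) - Real.log (1 + Real.exp x) ∧
      Real.log (1 + Real.exp y) - Real.log (1 + Real.exp x) ≤ y - x := by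
  have hx := Real.exp_pos x
  have hxy := Real.exp_le_exp.2 h
  constructor
  · exact sub_nonneg.2 (Real.log_le_log (by positivity) (by linarith))
  · have : 1 + Real.exp y ≤ Real.exp (y - x) * (1 + Real.exp x) := by
      have h1 : Real.exp (y - x) * Real.exp x = Real.exp y := by rw [← Real.exp_add]; simp
      have h2 : 1 ≤ Real.exp (y - x) := Real.one_le_exp (by linarith)
      nlinarith
    have := Real.log_le_log (by positivity) this
    rw [Real.log_mul (Real.exp_pos _).ne' (by positivity), Real.log_exp] at this
    linarith

lemma excess_lipschitz (a : ℝ) {u : ℝ} (hu : u ∈ Icc (0:ℝ) 1) (x y : ℝ) :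
    |excess a u x - excess a u y| ≤ |x - y| := by
  have aux : ∀ x y : ℝ, x ≤ y → |excess a u x - excess a u y| ≤ |x - y| := by
    intro x y h
    obtain ⟨h1, h2⟩ := log_one_add_exp_sub h
    rw [abs_sub_comm x y, abs_of_nonneg (sub_nonneg.2 h), abs_le]
    unfold excess
    constructor <;> nlinarith [hu.1, hu.2]
  rcases le_total x y with h | h
  · exact aux x y h
  · rw [abs_sub_comm, abs_sub_comm x]; exact aux y x h

lemma phiOf_symm {um up : ℝ} (hsum : um + up = 1) : phiOf um = -phiOf up := by
  unfold phiOf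
  rw [show 1 - um = up by linarith, show 1 - up = um by linarith, ← Real.log_inv, inv_div]

lemma phiOf_pos {um up : ℝ} (h0 : 0 < um) (h1 : um < up) (hsum : um + up = 1) :
    0 < phiOf up := by
  unfold phiOf
  refine Real.log_pos ?_
  rw [lt_div_iff₀ (by linarith)]
  linarith

/-- `cosh φ₊` in terms of `u₊`: `2 + 2 cosh (log (u₊/u₋)) = 1 / (u₊ u₋)`. -/
lemma log_two_add_cosh {um up : ℝ} (h0 : 0 < um) (h1 : um < up) (hsum : um + up = 1) :
    Real.log (2 + 2 * Real.cosh (phiOf up)) = -Real.log um - Real.log up := by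
  have hup : 0 < up := h0.trans h1
  have : 2 + 2 * Real.cosh (phiOf up) = 1 / (um * up) := by
    rw [Real.cosh_eq, ← phiOf_symm hsum]
    unfold phiOf
    rw [show 1 - um = up by linarith, show 1 - up = um by linarith, Real.exp_log (by positivity),
      Real.exp_log (by positivity)]
    field_simp
    have : um = 1 - up := by linarith
    subst this; ring
  rw [this, Real.log_div one_ne_zero (by positivity), Real.log_mul h0.ne' hup.ne', Real.log_one]
  ring

lemma gg_sub_eq {um up : ℝ} (h0 : 0 < um) (h1 : um < up) (hsum : um + up = 1) (u φ p : ℝ) :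
    gg u φ p - gg up (phiOf up) 0 = excess (phiOf up) u φ + S p := by
  have hup : 0 < up := h0.trans h1
  unfold excess
  rw [log_two_add_cosh h0 h1 hsum]
  have e : 1 + Real.exp (phiOf up) = um⁻¹ := by
    unfold phiOf
    rw [show 1 - up = um by linarith, Real.exp_log (by positivity)]
    field_simp; linarith
  have : gg up (phiOf up) 0 = Real.log um + Real.log up := by
    unfold gg
    rw [e, S_zero, Real.log_inv]
    unfold phiOf S
    rw [show 1 - up = um by linarith, Real.log_div hup.ne' h0.ne']
    have : um = 1 - up := by linarith
    subst this; ring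
  rw [this]
  unfold gg
  ring

lemma excess_right {um up : ℝ} (h0 : 0 < um) (h1 : um < up) (hsum : um + up = 1) (u : ℝ) :
    excess (phiOf up) u (phiOf up) = S u - u * Real.log up - (1 - u) * Real.log (1 - up) := by
  have hup : 0 < up := h0.trans h1
  have e : 1 + Real.exp (phiOf up) = um⁻¹ := by
    unfold phiOf
    rw [show 1 - up = um by linarith, Real.exp_log (by positivity)]
    field_simp; linarith
  unfold excess
  rw [log_two_add_cosh h0 h1 hsum, e, Real.log_inv]
  unfold phiOf
  rw [show 1 - up = um by linarith, Real.log_div hup.ne' h0.ne']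
  ring

lemma excess_left {um up : ℝ} (h0 : 0 < um) (h1 : um < up) (hsum : um + up = 1) (u : ℝ) :
    excess (phiOf up) u (phiOf um) = S u - u * Real.log um - (1 - u) * Real.log (1 - um) := by
  have hup : 0 < up := h0.trans h1
  have e : 1 + Real.exp (phiOf um) = up⁻¹ := by
    unfold phiOf
    rw [show 1 - um = up by linarith, Real.exp_log (by positivity)]
    field_simp; linarith
  unfold excess
  rw [log_two_add_cosh h0 h1 hsum, e, Real.log_inv]
  unfold phiOf
  rw [show 1 - um = up by linarith, Real.log_div h0.ne' hup.ne']
  ring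

/-- At the boundary values of `φ` the excess is comparable to the squared deviation of `u` from
the corresponding boundary value. -/
lemma excess_theta_bounds {um up : ℝ} (h0 : 0 < um) (h1 : um < up) (hsum : um + up = 1) {u : ℝ}
    (hu : u ∈ Icc (0:ℝ) 1) (x : ℝ) :
    (u - theta um up x) ^ 2 / 4 ≤ excess (phiOf up) u (theta (phiOf um) (phiOf up) x) ∧
    excess (phiOf up) u (theta (phiOf um) (phiOf up) x) ≤ (u - theta um up x) ^ 2 / (um * up) := by
  have hup : 0 < up := h0.trans h1
  unfold theta
  split_ifs
  · rw [excess_left h0 h1 hsum]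
    have v : um ∈ Ioo (0:ℝ) 1 := ⟨h0, by linarith⟩
    have := S_ge_tangent hu v
    have := S_le_tangent hu v
    rw [show um * up = um * (1 - um) by rw [show 1 - um = up by linarith]]
    constructor <;> linarith
  · rw [excess_right h0 h1 hsum]
    have v : up ∈ Ioo (0:ℝ) 1 := ⟨hup, by linarith⟩
    have := S_ge_tangent hu v
    have := S_le_tangent hu v
    rw [show um * up = up * (1 - up) by rw [show 1 - up = um by linarith]; ring]
    constructor <;> linarith


/-! ### The class of profiles `φ` -/

lemma MemC.monotone {pm pp : ℝ} {φ : ℝ → ℝ} (h : MemC pm pp φ) : Monotone φ :=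
  fun x y hxy => (h.1 x y hxy).1

lemma MemC.lipschitz {pm pp : ℝ} {φ : ℝ → ℝ} (h : MemC pm pp φ) : LipschitzWith 1 φ := by
  have aux : ∀ x y : ℝ, x ≤ y → |φ x - φ y| ≤ |x - y| := by
    intro x y hxy
    obtain ⟨h1, h2⟩ := h.1 x y hxy
    rw [abs_sub_comm, abs_of_nonneg (by linarith), abs_sub_comm, abs_of_nonneg (by linarith)]
    exact h2
  refine LipschitzWith.of_dist_le_mul fun x y => ?_
  rw [Real.dist_eq, Real.dist_eq, NNReal.coe_one, one_mul]
  rcases le_total x y with hxy | hxy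
  · exact aux x y hxy
  · rw [abs_sub_comm, abs_sub_comm x]; exact aux y x hxy

lemma MemC.continuous {pm pp : ℝ} {φ : ℝ → ℝ} (h : MemC pm pp φ) : Continuous φ :=
  h.lipschitz.continuous

lemma MemC.mem_Icc {pm pp : ℝ} {φ : ℝ → ℝ} (h : MemC pm pp φ) (x : ℝ) : φ x ∈ Icc pm pp :=
  ⟨h.monotone.le_of_tendsto h.2.1 x, h.monotone.ge_of_tendsto h.2.2 x⟩

lemma MemC.deriv_mem {pm pp : ℝ} {φ : ℝ → ℝ} (h : MemC pm pp φ) (x : ℝ) :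
    deriv φ x ∈ Icc (0:ℝ) 1 := by
  refine ⟨h.monotone.deriv_nonneg, ?_⟩
  have := norm_deriv_le_of_lipschitz (x₀ := x) h.lipschitz
  rw [Real.norm_eq_abs, NNReal.coe_one] at this
  exact (le_abs_self _).trans this

lemma intervalIntegrable_of_bdd {f : ℝ → ℝ} (hm : Measurable f) {C : ℝ} (hb : ∀ x, |f x| ≤ C)
    (A B : ℝ) : IntervalIntegrable f volume A B := by
  refine (intervalIntegrable_const (c := C)).mono_fun hm.aestronglyMeasurable ?_
  refine Eventually.of_forall fun x => ?_
  simp only [Real.norm_eq_abs]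
  exact (hb x).trans (le_abs_self C)

lemma abs_S_le {p : ℝ} (h : p ∈ Icc (0:ℝ) 1) : |S p| ≤ Real.log 2 :=
  abs_le.2 ⟨neg_log_two_le_S p, (S_nonpos h).trans (Real.log_nonneg (by norm_num))⟩

lemma intervalIntegrable_S {p : ℝ → ℝ} (hm : Measurable p) (hp : ∀ x, p x ∈ Icc (0:ℝ) 1)
    (A B : ℝ) : IntervalIntegrable (fun x => S (p x)) volume A B :=
  intervalIntegrable_of_bdd (continuous_S.measurable.comp hm) (fun x => abs_S_le (hp x)) A B

lemma intervalIntegrable_S_deriv {pm pp : ℝ} {φ : ℝ → ℝ} (h : MemC pm pp φ) (A B : ℝ) :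
    IntervalIntegrable (fun x => S (deriv φ x)) volume A B :=
  intervalIntegrable_S (measurable_deriv φ) h.deriv_mem A B

lemma continuous_log_one_add_exp : Continuous fun x : ℝ => Real.log (1 + Real.exp x) := by
  refine Continuous.log (by fun_prop) fun x => ?_
  have := Real.exp_pos x
  positivity

lemma continuous_pot (a : ℝ) : Continuous (pot a) := by
  have := continuous_log_one_add_exp
  unfold pot
  fun_prop

/-! ### The calibration bound for the entropy of `φ'` -/

/-- A primitive in `φ` of `log (c (r² - φ²))`, finite and continuous up to `|φ| = r`. -/
def prim (c r φ : ℝ) : ℝ :=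
  φ * Real.log c + (φ + r) * Real.log (φ + r) - (r - φ) * Real.log (r - φ) - 2 * φ

lemma continuous_prim (c : ℝ) : Continuous fun z : ℝ × ℝ => prim c z.1 z.2 := by
  unfold prim
  have h := Real.continuous_mul_log
  have h1 := h.comp (show Continuous fun z : ℝ × ℝ => z.2 + z.1 by fun_prop)
  have h2 := h.comp (show Continuous fun z : ℝ × ℝ => z.1 - z.2 by fun_prop)
  exact (((continuous_snd.mul_const _).add h1).sub h2).sub (by fun_prop)

lemma hasDerivAt_prim {c r φ : ℝ} (hc : 0 < c) (h1 : 0 < φ + r) (h2 : 0 < r - φ) :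
    HasDerivAt (prim c r) (Real.log (c * (r + φ) * (r - φ))) φ := by
  have d1 : HasDerivAt (fun x : ℝ => x + r) 1 φ := (hasDerivAt_id φ).add_const r
  have d2 : HasDerivAt (fun x : ℝ => r - x) (-1) φ := by
    simpa using (hasDerivAt_id φ).const_sub r
  have e1 := d1.mul (d1.log h1.ne')
  have e2 := d2.mul (d2.log h2.ne')
  have e0 := (hasDerivAt_id φ).mul_const (Real.log c)
  have e3 := (hasDerivAt_id φ).const_mul 2
  convert! ((e0.add e1).sub e2).sub e3 using 1
  have h1' : 0 < r + φ := by linarith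
  rw [Real.log_mul (by positivity) h2.ne', Real.log_mul hc.ne' h1'.ne', add_comm r φ]
  field_simp
  ring

/-- The calibration bound with the logarithmic singularities at `φ = ± a` moved out to
`φ = ± r`, so that the primitive is Lipschitz along `φ`. -/
lemma entropy_lower_aux {a r : ℝ} {φ : ℝ → ℝ} (h : MemC (-a) a φ) (hr : a < r) {A B : ℝ}
    (hAB : A ≤ B) :
    prim (cst a) r (φ B) - prim (cst a) r (φ A) - (1 / 2) * (∫ x in A..B, pot a (φ x))
      - (B - A) * (cst a * (r ^ 2 - a ^ 2)) ≤ ∫ x in A..B, S (deriv φ x) := by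
  set c := cst a with hc
  have hcpos : 0 < c := cst_pos a
  have hpos : ∀ y ∈ Icc (-a) a, 0 < y + r ∧ 0 < r - y := fun y hy =>
    ⟨by linarith [hy.1], by linarith [hy.2]⟩
  have hlip : ∃ K, LipschitzOnWith K (prim c r) (Icc (-a) a) := by
    refine ContDiffOn.exists_lipschitzOnWith (n := 1) ?_ one_ne_zero (convex_Icc _ _) isCompact_Icc
    intro y hy
    have h1 : ContDiffAt ℝ 1 (fun y : ℝ => Real.log (y + r)) y :=
      ContDiffAt.log (by fun_prop) (hpos y hy).1.ne'
    have h2 : ContDiffAt ℝ 1 (fun y : ℝ => Real.log (r - y)) y :=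
      ContDiffAt.log (by fun_prop) (hpos y hy).2.ne'
    refine ContDiffAt.contDiffWithinAt ?_
    unfold prim
    fun_prop
  obtain ⟨K, hK⟩ := hlip
  have hcomp : LipschitzOnWith (K * 1) (fun x => prim c r (φ x)) (uIcc A B) :=
    hK.comp h.lipschitz.lipschitzOnWith fun x _ => h.mem_Icc x
  have hAC := hcomp.absolutelyContinuousOnInterval
  rw [← hAC.integral_deriv_eq_sub]
  have hi1 := hAC.intervalIntegrable_deriv
  have hi2 : IntervalIntegrable (fun x => pot a (φ x)) volume A B :=
    ((continuous_pot a).comp h.continuous).intervalIntegrable A B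
  have e : (∫ x in A..B, (deriv (fun x => prim c r (φ x)) x - (1 / 2) * pot a (φ x)
      - c * (r ^ 2 - a ^ 2))) = (∫ x in A..B, deriv (fun x => prim c r (φ x)) x)
      - (1 / 2) * (∫ x in A..B, pot a (φ x)) - (B - A) * (c * (r ^ 2 - a ^ 2)) := by
    rw [intervalIntegral.integral_sub (hi1.sub (hi2.const_mul _)) intervalIntegrable_const,
      intervalIntegral.integral_sub hi1 (hi2.const_mul _), intervalIntegral.integral_const_mul,
      intervalIntegral.integral_const, smul_eq_mul]
  rw [← e]
  refine intervalIntegral.integral_mono_ae hAB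
    ((hi1.sub (hi2.const_mul _)).sub intervalIntegrable_const)
    (intervalIntegrable_S_deriv h A B) ?_
  filter_upwards [h.lipschitz.ae_differentiableAt_real] with x hx
  obtain ⟨p1, p2⟩ := hpos _ (h.mem_Icc x)
  have hd := (hasDerivAt_prim hcpos p1 p2).comp x hx.hasDerivAt
  have hd' : deriv (fun x => prim c r (φ x)) x
    = Real.log (c * (r + φ x) * (r - φ x)) * deriv φ x := hd.deriv
  rw [hd']
  have hq : 0 < c * (r + φ x) * (r - φ x) := mul_pos (mul_pos hcpos (by linarith)) p2
  have h1 := S_dual (h.deriv_mem x) (Real.log (c * (r + φ x) * (r - φ x)))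
  rw [Real.exp_log hq] at h1
  have h2 := Real.log_le_sub_one_of_pos (show 0 < 1 + c * (r + φ x) * (r - φ x) by linarith)
  have h3 := pot_ge (h.mem_Icc x)
  rw [← hc] at h3
  nlinarith

/-- The entropy of `φ'` is bounded below by a boundary term minus half of the potential energy.
The potential `pot a` dominates `2 c (a² - φ²)`, so `q = log (c (a² - φ²))` satisfies
`log (1 + e^q) ≤ pot a φ / 2`, and Fenchel's inequality `S p ≥ p q - log (1 + e^q)` at `p = φ'`
produces the exact derivative `φ' q(φ)`. -/
lemma entropy_lower {a : ℝ} {φ : ℝ → ℝ} (h : MemC (-a) a φ) {A B : ℝ} (hAB : A ≤ B) :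
    prim (cst a) a (φ B) - prim (cst a) a (φ A) - (1 / 2) * (∫ x in A..B, pot a (φ x))
      ≤ ∫ x in A..B, S (deriv φ x) := by
  have hcont : Continuous fun r : ℝ => prim (cst a) r (φ B) - prim (cst a) r (φ A)
      - (1 / 2) * (∫ x in A..B, pot a (φ x)) - (B - A) * (cst a * (r ^ 2 - a ^ 2)) := by
    have h1 := (continuous_prim (cst a)).comp (show Continuous fun r : ℝ => (r, φ B) by fun_prop)
    have h2 := (continuous_prim (cst a)).comp (show Continuous fun r : ℝ => (r, φ A) by fun_prop)
    exact ((h1.sub h2).sub continuous_const).sub (by fun_prop)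
  have ht := (hcont.tendsto a).mono_left (nhdsWithin_le_nhds (s := Ioi a))
  simp only [sub_self, mul_zero, sub_zero] at ht
  refine le_of_tendsto ht ?_
  filter_upwards [self_mem_nhdsWithin] with r hr
  exact entropy_lower_aux h hr hAB


/-! ### Weak lower semicontinuity of the entropy -/

/-- Convexity of `S` makes the entropy over a bounded interval lower semicontinuous under weak-*
convergence: the tangent to `S` along a slight contraction of the limit is affine in the
approximants and has bounded coefficients. -/
lemma entropy_lsc {p : ℝ → ℝ → ℝ} {q : ℝ → ℝ} (hpm : ∀ l, Measurable (p l))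
    (hp : ∀ l x, p l x ∈ Icc (0:ℝ) 1) (hqm : Measurable q) (hq : ∀ x, q x ∈ Icc (0:ℝ) 1)
    (hconv : ∀ f : ℝ → ℝ, Integrable f volume →
      Tendsto (fun l => ∫ x, p l x * f x) atTop (𝓝 (∫ x, q x * f x)))
    {A B : ℝ} (hAB : A ≤ B) {η : ℝ} (hη : 0 < η) :
    ∀ᶠ l in atTop, (∫ x in A..B, S (q x)) - η ≤ ∫ x in A..B, S (p l x) := by
  obtain ⟨d, hd0, hd, hdη⟩ : ∃ d : ℝ, 0 < d ∧ d < 1 / 2 ∧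
      -(η / 2) < (B - A) * Real.log (1 - 2 * d) := by
    have hc : ContinuousAt (fun d : ℝ => (B - A) * Real.log (1 - 2 * d)) 0 := by
      refine continuousAt_const.mul (ContinuousAt.log (by fun_prop) (by norm_num))
    have h0 : -(η / 2) < (B - A) * Real.log (1 - 2 * 0) := by simp; linarith
    have h1 := (hc.eventually (lt_mem_nhds h0)).filter_mono (nhdsWithin_le_nhds (s := Ioi 0))
    have h2 : ∀ᶠ d : ℝ in 𝓝[>] 0, d < 1 / 2 :=
      (gt_mem_nhds (by norm_num)).filter_mono nhdsWithin_le_nhds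
    obtain ⟨d, h, h', h''⟩ := (h1.and (h2.and self_mem_nhdsWithin)).exists
    exact ⟨d, h'', h', h⟩
  set w : ℝ → ℝ := fun x => (1 - 2 * d) * q x + d with hw
  have hw1 : ∀ x, d ≤ w x ∧ w x ≤ 1 - d := fun x =>
    ⟨by simp only [hw]; nlinarith [(hq x).1], by simp only [hw]; nlinarith [(hq x).2]⟩
  have hwm : Measurable w := (hqm.const_mul _).add_const _
  have hwI : ∀ x, w x ∈ Ioo (0:ℝ) 1 := fun x => ⟨by linarith [(hw1 x).1], by linarith [(hw1 x).2]⟩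
  have logb : ∀ y, d ≤ y → y ≤ 1 → |Real.log y| ≤ -Real.log d := by
    intro y h1 h2
    rw [abs_of_nonpos (Real.log_nonpos (hd0.le.trans h1) h2)]
    linarith [Real.log_le_log hd0 h1]
  have hlog1 : ∀ x, |Real.log (w x)| ≤ -Real.log d := fun x =>
    logb _ (hw1 x).1 (by linarith [(hw1 x).2])
  have hlog2 : ∀ x, |Real.log (1 - w x)| ≤ -Real.log d := fun x =>
    logb _ (by linarith [(hw1 x).2]) (by linarith [(hw1 x).1])
  set α : ℝ → ℝ := fun x => Real.log (w x) - Real.log (1 - w x) with hα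
  set β : ℝ → ℝ := fun x => Real.log (1 - w x) with hβ
  have hβm : Measurable β := (measurable_const.sub hwm).log
  have hαm : Measurable α := hwm.log.sub hβm
  have hαb : ∀ x, |α x| ≤ -Real.log d + -Real.log d := fun x =>
    (abs_sub _ _).trans (add_le_add (hlog1 x) (hlog2 x))
  have hβi : IntervalIntegrable β volume A B := intervalIntegrable_of_bdd hβm hlog2 A B
  have hαi : IntervalIntegrable α volume A B := intervalIntegrable_of_bdd hαm hαb A B
  have hprod : ∀ r : ℝ → ℝ, Measurable r → (∀ x, r x ∈ Icc (0:ℝ) 1) →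
      IntervalIntegrable (fun x => r x * α x) volume A B := by
    intro r hrm hr
    refine intervalIntegrable_of_bdd (C := -Real.log d + -Real.log d) (hrm.mul hαm)
      (fun x => ?_) A B
    simp only [Pi.mul_apply, abs_mul, abs_of_nonneg (hr x).1]
    nlinarith [hαb x, (hr x).2, (hr x).1, abs_nonneg (α x)]
  have hint : ∀ r : ℝ → ℝ,
      ∫ x, r x * (Ioc A B).indicator α x = ∫ x in A..B, r x * α x := by
    intro r
    rw [intervalIntegral.integral_of_le hAB, ← integral_indicator measurableSet_Ioc]
    congr 1
    ext x
    by_cases hx : x ∈ Ioc A B <;> simp [hx]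
  have hlim := hconv ((Ioc A B).indicator α)
    (((intervalIntegrable_iff_integrableOn_Ioc_of_le hAB).1 hαi).integrable_indicator
      measurableSet_Ioc)
  simp only [hint] at hlim
  have hlower : ∀ᶠ l in atTop, (∫ x in A..B, q x * α x) - η / 2 < ∫ x in A..B, p l x * α x :=
    hlim.eventually (lt_mem_nhds (by linarith))
  filter_upwards [hlower] with l hl
  have h1 : (∫ x in A..B, p l x * α x) + ∫ x in A..B, β x ≤ ∫ x in A..B, S (p l x) := by
    rw [← intervalIntegral.integral_add (hprod _ (hpm l) (hp l)) hβi]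
    refine intervalIntegral.integral_mono_on hAB ((hprod _ (hpm l) (hp l)).add hβi)
      (intervalIntegrable_S (hpm l) (hp l) A B) fun x _ => ?_
    have := S_ge_tangent (hp l x) (hwI x)
    simp only [hα, hβ]
    nlinarith [sq_nonneg (p l x - w x)]
  have h2 : (∫ x in A..B, S (q x)) + (B - A) * Real.log (1 - 2 * d)
      ≤ (∫ x in A..B, q x * α x) + ∫ x in A..B, β x := by
    have e : (∫ x in A..B, S (q x)) + (B - A) * Real.log (1 - 2 * d)
        = ∫ x in A..B, (S (q x) + Real.log (1 - 2 * d)) := by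
      rw [intervalIntegral.integral_add (intervalIntegrable_S hqm hq A B) intervalIntegrable_const,
        intervalIntegral.integral_const, smul_eq_mul]
    rw [e, ← intervalIntegral.integral_add (hprod _ hqm hq) hβi]
    refine intervalIntegral.integral_mono_on hAB
      ((intervalIntegrable_S hqm hq A B).add intervalIntegrable_const)
      ((hprod _ hqm hq).add hβi) fun x _ => ?_
    have := S_tangent_near (hq x) hd0 hd
    simp only [hα, hβ, hw]
    linarith
  linarith

/-- Uniform convergence of profiles in `C` implies weak-* convergence of their derivatives. -/
lemma deriv_weak_conv {pm pp : ℝ} {Φ : ℝ → ℝ → ℝ} {φ : ℝ → ℝ} (hΦ : ∀ l, MemC pm pp (Φ l))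
    (hφ : MemC pm pp φ) (hu : TendstoUniformly Φ φ atTop) (f : ℝ → ℝ) (hf : Integrable f volume) :
    Tendsto (fun l => ∫ x, deriv (Φ l) x * f x) atTop (𝓝 (∫ x, deriv φ x * f x)) := by
  have hmul : ∀ ψ : ℝ → ℝ, MemC pm pp ψ → ∀ k : ℝ → ℝ, Integrable k volume →
      Integrable (fun x => deriv ψ x * k x) volume := by
    intro ψ hψ k hk
    refine hk.bdd_mul (c := 1) (measurable_deriv ψ).aestronglyMeasurable ?_
    refine Eventually.of_forall fun x => ?_
    rw [Real.norm_eq_abs, abs_of_nonneg (hψ.deriv_mem x).1]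
    exact (hψ.deriv_mem x).2
  have hbd : ∀ ψ : ℝ → ℝ, MemC pm pp ψ → ∀ k : ℝ → ℝ, Integrable k volume →
      |∫ x, deriv ψ x * k x| ≤ ∫ x, |k x| := by
    intro ψ hψ k hk
    refine abs_integral_le_integral_abs.trans (integral_mono (hmul ψ hψ k hk).abs hk.abs ?_)
    intro x
    simp only [abs_mul, abs_of_nonneg (hψ.deriv_mem x).1]
    nlinarith [(hψ.deriv_mem x).2, abs_nonneg (k x)]
  rw [Metric.tendsto_atTop']
  intro ε hε
  obtain ⟨g, hgc, hgs, hg⟩ := (memLp_one_iff_integrable.2 hf).exist_eLpNorm_sub_le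
    ENNReal.one_ne_top le_rfl (show 0 < ε / 8 by positivity)
  have hgi : Integrable g volume := hgs.continuous.integrable_of_hasCompactSupport hgc
  have hfg : Integrable (fun x => f x - g x) volume := hf.sub hgi
  have hfgε : ∫ x, |f x - g x| ≤ ε / 8 := by
    rw [eLpNorm_one_eq_lintegral_enorm] at hg
    have := integral_norm_eq_lintegral_enorm hfg.aestronglyMeasurable
    simp only [Real.norm_eq_abs] at this
    rw [this]
    exact ENNReal.toReal_le_of_le_ofReal (by positivity) hg
  obtain ⟨D, hD⟩ := ContDiff.lipschitzWith_of_hasCompactSupport hgc hgs (by simp)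
  have hg'c : Continuous (deriv g) := hgs.continuous_deriv (by simp)
  have hg'i : Integrable (deriv g) volume := hg'c.integrable_of_hasCompactSupport hgc.deriv
  have hparts : ∀ ψ : ℝ → ℝ, MemC pm pp ψ →
      ∫ x, deriv ψ x * g x = -∫ x, deriv g x * ψ x := by
    intro ψ hψ
    have := hψ.lipschitz.integral_lineDeriv_mul_eq (μ := volume) hD hgc 1
    have e1 : ∀ (k : ℝ → ℝ) x, lineDeriv ℝ k x 1 = deriv k x := by
      intro k x
      simp only [lineDeriv, smul_eq_mul, mul_one]
      rw [deriv_comp_const_add]; simp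
    simp only [lineDeriv_neg, e1] at this
    rw [this, ← integral_neg]
    simp
  have hΦi : ∀ ψ : ℝ → ℝ, MemC pm pp ψ → Integrable (fun x => deriv g x * ψ x) volume := by
    intro ψ hψ
    exact (hg'c.mul hψ.continuous).integrable_of_hasCompactSupport hgc.deriv.mul_right
  set I := ∫ x, |deriv g x| with hI
  have hI0 : 0 ≤ I := integral_nonneg fun x => abs_nonneg _
  have hev := (Metric.tendstoUniformly_iff.1 hu) (ε / (4 * (I + 1))) (by positivity)
  obtain ⟨N, hN⟩ := eventually_atTop.1 hev
  refine ⟨N, fun l hl => ?_⟩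
  have hN' := hN l hl.le
  have k1 := hbd _ (hΦ l) _ hfg
  have k2 := hbd _ hφ _ hfg
  have s1 : ∀ ψ : ℝ → ℝ, MemC pm pp ψ → ∫ x, deriv ψ x * (f x - g x) =
      (∫ x, deriv ψ x * f x) - ∫ x, deriv ψ x * g x := by
    intro ψ hψ
    rw [← integral_sub (hmul ψ hψ f hf) (hmul ψ hψ g hgi)]
    simp only [mul_sub]
  rw [s1 _ (hΦ l)] at k1
  rw [s1 _ hφ] at k2
  have k3 : |(∫ x, deriv (Φ l) x * g x) - ∫ x, deriv φ x * g x| ≤ ε / 4 := by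
    rw [hparts _ (hΦ l), hparts _ hφ, neg_sub_neg, ← integral_sub (hΦi _ hφ) (hΦi _ (hΦ l))]
    have : ∫ x, |deriv g x * φ x - deriv g x * Φ l x| ≤ ∫ x, (ε / (4 * (I + 1))) * |deriv g x| := by
      refine integral_mono ((hΦi _ hφ).sub (hΦi _ (hΦ l))).abs (hg'i.abs.const_mul _) fun x => ?_
      have := hN' x
      rw [Real.dist_eq] at this
      simp only [← mul_sub, abs_mul]
      rw [mul_comm]
      exact mul_le_mul_of_nonneg_right this.le (abs_nonneg _)
    rw [integral_const_mul, ← hI] at this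
    refine abs_integral_le_integral_abs.trans (this.trans ?_)
    rw [div_mul_eq_mul_div, div_le_div_iff₀ (by positivity) (by norm_num)]
    nlinarith
  rw [Real.dist_eq]
  rw [abs_le] at k1 k2 k3
  rw [abs_lt]
  constructor <;> linarith [k1.1, k1.2, k2.1, k2.2, k3.1, k3.2]


/-! ### The domain of `G` -/

lemma continuous_excess (a : ℝ) : Continuous fun z : ℝ × ℝ => excess a z.1 z.2 := by
  have h1 := continuous_S.comp (continuous_fst (X := ℝ) (Y := ℝ))
  have h2 := continuous_log_one_add_exp.comp (continuous_snd (X := ℝ) (Y := ℝ))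
  unfold excess
  exact ((h1.add (by fun_prop)).sub h2).add continuous_const

lemma measurable_excess (a : ℝ) {u φ : ℝ → ℝ} (hu : Measurable u) (hφ : Measurable φ) :
    Measurable fun x => excess a (u x) (φ x) :=
  (continuous_excess a).measurable.comp (hu.prodMk hφ)

lemma intervalIntegrable_excess (a : ℝ) {u φ : ℝ → ℝ} (hu : MemU u) (hφ : MemC (-a) a φ)
    (A B : ℝ) : IntervalIntegrable (fun x => excess a (u x) (φ x)) volume A B := by
  obtain ⟨C, hC⟩ := ((isCompact_Icc (a := (0:ℝ)) (b := 1)).prod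
    (isCompact_Icc (a := -a) (b := a))).exists_bound_of_continuousOn
    (continuous_excess a).continuousOn
  exact intervalIntegrable_of_bdd (measurable_excess a hu.1 hφ.continuous.measurable)
    (fun x => hC (u x, φ x) ⟨hu.2 x, hφ.mem_Icc x⟩) A B

/-- The energy density `g(u,φ,φ') - g(u₊,φ₊,0)`. -/
def dens (a : ℝ) (u φ : ℝ → ℝ) (x : ℝ) : ℝ := excess a (u x) (φ x) + S (deriv φ x)

lemma intervalIntegrable_dens (a : ℝ) {u φ : ℝ → ℝ} (hu : MemU u) (hφ : MemC (-a) a φ)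
    (A B : ℝ) : IntervalIntegrable (dens a u φ) volume A B :=
  (intervalIntegrable_excess a hu hφ A B).add (intervalIntegrable_S_deriv hφ A B)

lemma integral_dens (a : ℝ) {u φ : ℝ → ℝ} (hu : MemU u) (hφ : MemC (-a) a φ) (A B : ℝ) :
    ∫ x in A..B, dens a u φ x =
      (∫ x in A..B, excess a (u x) (φ x)) + ∫ x in A..B, S (deriv φ x) :=
  intervalIntegral.integral_add (intervalIntegrable_excess a hu hφ A B)
    (intervalIntegrable_S_deriv hφ A B)

/-- Calibration: half of the (nonnegative) excess survives after paying a boundary term. -/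
lemma energy_lower {a : ℝ} {u φ : ℝ → ℝ} (hu : MemU u) (hφ : MemC (-a) a φ) {A B : ℝ}
    (hAB : A ≤ B) :
    prim (cst a) a (φ B) - prim (cst a) a (φ A) + (1 / 2) * ∫ x in A..B, excess a (u x) (φ x)
      ≤ ∫ x in A..B, dens a u φ x := by
  rw [integral_dens a hu hφ]
  have h1 := entropy_lower hφ hAB
  have h2 : ∫ x in A..B, pot a (φ x) ≤ ∫ x in A..B, excess a (u x) (φ x) :=
    intervalIntegral.integral_mono_on hAB
      (((continuous_pot a).comp hφ.continuous).intervalIntegrable A B)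
      (intervalIntegrable_excess a hu hφ A B) fun x _ => pot_le_excess a _ (hu.2 x)
  linarith

lemma integral_excess_nonneg {a : ℝ} {u φ : ℝ → ℝ} (hu : MemU u) (hφ : MemC (-a) a φ) {A B : ℝ}
    (hAB : A ≤ B) : 0 ≤ ∫ x in A..B, excess a (u x) (φ x) :=
  intervalIntegral.integral_nonneg hAB fun x _ => excess_nonneg (hφ.mem_Icc x) (hu.2 x)

lemma MemX.memC {um up : ℝ} (hsum : um + up = 1) {u φ : ℝ → ℝ} (h : MemX um up u φ) :
    MemC (-phiOf up) (phiOf up) φ := by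
  rw [← phiOf_symm hsum]; exact h.2

/-- The domain of `G`. -/
def Dom (um up : ℝ) (u φ : ℝ → ℝ) : Prop :=
  Integrable (fun x => (u x - theta um up x)^2) volume ∧
    Integrable (fun x => φ x - theta (phiOf um) (phiOf up) x) volume

lemma measurable_theta (x y : ℝ) : Measurable (theta x y) :=
  Measurable.ite measurableSet_Iio measurable_const measurable_const

lemma Dom.integrable_excess {um up : ℝ} (h0 : 0 < um) (h1 : um < up) (hsum : um + up = 1)
    {u φ : ℝ → ℝ} (hX : MemX um up u φ) (hD : Dom um up u φ) :
    Integrable (fun x => excess (phiOf up) (u x) (φ x)) volume := by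
  have hφ := hX.memC hsum
  refine ((hD.1.div_const (um * up)).add hD.2.abs).mono'
    (measurable_excess _ hX.1.1 hφ.continuous.measurable).aestronglyMeasurable ?_
  refine Eventually.of_forall fun x => ?_
  rw [Real.norm_eq_abs, abs_of_nonneg (excess_nonneg (hφ.mem_Icc x) (hX.1.2 x))]
  have k1 := (excess_theta_bounds h0 h1 hsum (hX.1.2 x) x).2
  have k2 := (abs_le.1 (excess_lipschitz (phiOf up) (hX.1.2 x) (φ x)
    (theta (phiOf um) (phiOf up) x))).2
  simp only [Pi.add_apply]
  linarith

lemma dom_of_integrable_excess {um up : ℝ} (h0 : 0 < um) (h1 : um < up) (hsum : um + up = 1)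
    {u φ : ℝ → ℝ} (hX : MemX um up u φ)
    (hi : Integrable (fun x => excess (phiOf up) (u x) (φ x)) volume) : Dom um up u φ := by
  have hφ := hX.memC hsum
  have ha : 0 < phiOf up := phiOf_pos h0 h1 hsum
  have hsymm := phiOf_symm hsum
  have hc := cst_pos (phiOf up)
  have hexc : ∀ x, 2 * cst (phiOf up) * ((phiOf up) ^ 2 - (φ x) ^ 2)
      ≤ excess (phiOf up) (u x) (φ x) := fun x =>
    (pot_ge (hφ.mem_Icc x)).trans (pot_le_excess _ _ (hX.1.2 x))
  obtain ⟨R, hR⟩ := eventually_atTop.1 (hφ.2.2.eventually (lt_mem_nhds ha))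
  obtain ⟨L, hL⟩ := eventually_atBot.1
    (hφ.2.1.eventually (gt_mem_nhds (show -phiOf up < 0 by linarith)))
  have hφi : Integrable (fun x => φ x - theta (phiOf um) (phiOf up) x) volume := by
    -- Outside `[min L 0, max R 0]` the profile has the sign of its limit, and there
    -- `a² - φ² ≥ a |φ - θ|`.
    have hbox : Integrable ((Icc (min L 0) (max R 0)).indicator
        fun _ : ℝ => 2 * phiOf up) volume :=
      continuous_const.integrableOn_Icc.integrable_indicator measurableSet_Icc
    refine ((hi.div_const (2 * cst (phiOf up) * phiOf up)).add hbox).mono'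
      (hφ.continuous.measurable.sub (measurable_theta _ _)).aestronglyMeasurable ?_
    refine Eventually.of_forall fun x => ?_
    rw [Real.norm_eq_abs]
    simp only [Pi.add_apply]
    have m := hφ.mem_Icc x
    have e0 := excess_nonneg m (hX.1.2 x)
    have e0' : 0 ≤ excess (phiOf up) (u x) (φ x) / (2 * cst (phiOf up) * phiOf up) := by
      positivity
    by_cases hx : x ∈ Icc (min L 0) (max R 0)
    · rw [indicator_of_mem hx]
      have : |φ x - theta (phiOf um) (phiOf up) x| ≤ 2 * phiOf up := by
        unfold theta
        rw [hsymm, abs_le]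
        split_ifs <;> constructor <;> linarith [m.1, m.2]
      linarith
    · rw [indicator_of_notMem hx, add_zero, le_div_iff₀ (by positivity)]
      rw [mem_Icc, not_and_or, not_le, not_le] at hx
      refine le_trans ?_ (hexc x)
      rw [show |φ x - theta (phiOf um) (phiOf up) x| * (2 * cst (phiOf up) * phiOf up)
        = 2 * cst (phiOf up) * (|φ x - theta (phiOf um) (phiOf up) x| * phiOf up) by ring]
      refine mul_le_mul_of_nonneg_left ?_ (by positivity)
      rcases hx with hx | hx
      · have x0 : x < 0 := hx.trans_le (min_le_right _ _)
        have := hL x (hx.trans_le (min_le_left _ _)).le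
        unfold theta
        rw [if_pos x0, hsymm, abs_of_nonneg (by linarith [m.1])]
        nlinarith [m.1]
      · have x0 : ¬ x < 0 := not_lt.2 ((le_max_right _ _).trans hx.le)
        have := hR x ((le_max_left _ _).trans hx.le)
        unfold theta
        rw [if_neg x0, abs_of_nonpos (by linarith [m.2])]
        nlinarith [m.2]
  refine ⟨?_, hφi⟩
  refine ((hi.add hφi.abs).const_mul 4).mono'
    ((hX.1.1.sub (measurable_theta _ _)).pow_const 2).aestronglyMeasurable ?_
  refine Eventually.of_forall fun x => ?_
  rw [Real.norm_eq_abs, abs_of_nonneg (sq_nonneg _)]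
  have k1 := (excess_theta_bounds h0 h1 hsum (hX.1.2 x) x).1
  have k2 := (abs_le.1 (excess_lipschitz (phiOf up) (hX.1.2 x) (φ x)
    (theta (phiOf um) (phiOf up) x))).1
  simp only [Pi.add_apply]
  linarith

lemma prim_bdd (a : ℝ) : ∃ C, ∀ y ∈ Icc (-a) a, |prim (cst a) a y| ≤ C := by
  have hc := (continuous_prim (cst a)).comp (show Continuous fun y : ℝ => (a, y) by fun_prop)
  exact (isCompact_Icc (a := -a) (b := a)).exists_bound_of_continuousOn hc.continuousOn

/-- On the domain of `G` the entropy term is integrable: its negative part is controlled by the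
calibration bound. -/
lemma Dom.integrable_S {um up : ℝ} (h0 : 0 < um) (h1 : um < up) (hsum : um + up = 1)
    {u φ : ℝ → ℝ} (hX : MemX um up u φ) (hD : Dom um up u φ) :
    Integrable (fun x => S (deriv φ x)) volume := by
  have hφ := hX.memC hsum
  have hi := hD.integrable_excess h0 h1 hsum hX
  obtain ⟨C, hC⟩ := prim_bdd (phiOf up)
  refine integrable_of_intervalIntegral_norm_bounded (l := (atTop : Filter ℝ))
    (a := fun M => -M) (b := fun M => M)
    (2 * C + (1 / 2) * ∫ x, excess (phiOf up) (u x) (φ x))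
    (fun M => (intervalIntegrable_S_deriv hφ (-M) M).1)
    tendsto_neg_atTop_atBot tendsto_id ?_
  filter_upwards [eventually_ge_atTop 0] with M hM
  have hAB : -M ≤ M := by linarith
  have k := energy_lower hX.1 hφ hAB
  rw [integral_dens _ hX.1 hφ] at k
  have e : ∫ x in (-M)..M, ‖S (deriv φ x)‖ = -∫ x in (-M)..M, S (deriv φ x) := by
    rw [← intervalIntegral.integral_neg]
    refine intervalIntegral.integral_congr fun x _ => ?_
    simp only [Real.norm_eq_abs]
    exact abs_of_nonpos (S_nonpos (hφ.deriv_mem x))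
  have b1 := abs_le.1 (hC _ (hφ.mem_Icc M))
  have b2 := abs_le.1 (hC _ (hφ.mem_Icc (-M)))
  have k2 : ∫ x in (-M)..M, excess (phiOf up) (u x) (φ x)
      ≤ ∫ x, excess (phiOf up) (u x) (φ x) := by
    rw [intervalIntegral.integral_of_le hAB]
    exact setIntegral_le_integral hi
      (Eventually.of_forall fun x => excess_nonneg (hφ.mem_Icc x) (hX.1.2 x))
  rw [e]
  linarith

lemma GE_of_dom {um up : ℝ} (h0 : 0 < um) (h1 : um < up) (hsum : um + up = 1)
    {u φ : ℝ → ℝ} (hD : Dom um up u φ) :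
    GE um up u φ = ((∫ x, dens (phiOf up) u φ x : ℝ) : EReal) := by
  unfold Dom at hD
  unfold GE
  rw [if_pos hD]
  simp only [gg_sub_eq h0 h1 hsum]
  rfl

lemma GE_of_not_dom {um up : ℝ} {u φ : ℝ → ℝ} (hD : ¬ Dom um up u φ) : GE um up u φ = ⊤ := by
  unfold Dom at hD
  unfold GE
  rw [if_neg hD]

/-- The boundary condition in the definition of `G_ℓ`. -/
def Bdry (um up l : ℝ) (u φ : ℝ → ℝ) : Prop :=
  (∀ x ≤ -l, u x = um ∧ φ x = phiOf um) ∧ (∀ x, l ≤ x → u x = up ∧ φ x = phiOf up)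

lemma Gl_of_bdry {um up l : ℝ} (h0 : 0 < um) (h1 : um < up) (hsum : um + up = 1) (hl : 0 ≤ l)
    {u φ : ℝ → ℝ} (hB : Bdry um up l u φ) :
    Gl um up l u φ = ((∫ x in (-l)..l, dens (phiOf up) u φ x : ℝ) : EReal) := by
  unfold Bdry at hB
  unfold Gl
  rw [if_pos hB, intervalIntegral.integral_of_le (by linarith), integral_Ioc_eq_integral_Ioo]
  simp only [gg_sub_eq h0 h1 hsum]
  rfl

lemma Gl_of_not_bdry {um up l : ℝ} {u φ : ℝ → ℝ} (hB : ¬ Bdry um up l u φ) :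
    Gl um up l u φ = ⊤ := by
  unfold Bdry at hB
  unfold Gl
  rw [if_neg hB]


/-! ### The lower bound -/

/-- Lower semicontinuity of the energy in a fixed window. -/
lemma energy_lsc {a : ℝ} {u φ : ℝ → ℝ} {U Φ : ℝ → ℝ → ℝ} (hu : MemU u)
    (hφ : MemC (-a) a φ) (hU : ∀ l, MemU (U l)) (hΦ : ∀ l, MemC (-a) a (Φ l))
    (hc : ConvXFam U Φ u φ) {A B : ℝ} (hAB : A ≤ B) {η : ℝ} (hη : 0 < η) :
    ∀ᶠ l in atTop, (∫ x in A..B, dens a u φ x) - η ≤ ∫ x in A..B, dens a (U l) (Φ l) x := by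
  have h1 := entropy_lsc (fun l => (hU l).1) (fun l => (hU l).2) hu.1 hu.2 hc.1 hAB
    (show 0 < η / 4 by linarith)
  have h2 := entropy_lsc (fun l => measurable_deriv (Φ l)) (fun l => (hΦ l).deriv_mem)
    (measurable_deriv φ) hφ.deriv_mem (deriv_weak_conv hΦ hφ hc.2) hAB
    (show 0 < η / 4 by linarith)
  have hφi : Integrable ((Ioc A B).indicator φ) volume :=
    (hφ.continuous.integrableOn_Icc.mono_set Ioc_subset_Icc_self).integrable_indicator
      measurableSet_Ioc
  have hind : ∀ v : ℝ → ℝ, ∫ x, v x * (Ioc A B).indicator φ x = ∫ x in A..B, v x * φ x := by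
    intro v
    rw [intervalIntegral.integral_of_le hAB, ← integral_indicator measurableSet_Ioc]
    refine integral_congr_ae (Eventually.of_forall fun x => ?_)
    by_cases hx : x ∈ Ioc A B <;> simp [hx]
  have h3 := hc.1 _ hφi
  simp only [hind] at h3
  have h3' := h3.eventually (gt_mem_nhds (show (∫ x in A..B, u x * φ x)
    < (∫ x in A..B, u x * φ x) + η / 4 by linarith))
  have hd : 0 < η / (4 * (B - A + 1)) := div_pos hη (by linarith)
  have h4 := Metric.tendstoUniformly_iff.1 hc.2 _ hd
  filter_upwards [h1, h2, h3', h4] with l k1 k2 k3 k4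
  rw [integral_dens a hu hφ, integral_dens a (hU l) (hΦ l)]
  have hsplit : ∀ v : ℝ → ℝ, MemU v → ∫ x in A..B, excess a (v x) (φ x) =
      (∫ x in A..B, S (v x)) - (∫ x in A..B, v x * φ x) +
        ∫ x in A..B, (φ x - Real.log (1 + Real.exp (φ x)) + Real.log (2 + 2 * Real.cosh a)) := by
    intro v hv
    have i1 := intervalIntegrable_S hv.1 hv.2 A B
    have i2 : IntervalIntegrable (fun x => v x * φ x) volume A B :=
      (intervalIntegrable_of_bdd hv.1 (C := 1)
        (fun x => abs_le.2 ⟨by linarith [(hv.2 x).1], (hv.2 x).2⟩) A B).mul_continuousOn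
        hφ.continuous.continuousOn
    have i3 : IntervalIntegrable (fun x => φ x - Real.log (1 + Real.exp (φ x))
        + Real.log (2 + 2 * Real.cosh a)) volume A B :=
      ((hφ.continuous.sub (continuous_log_one_add_exp.comp hφ.continuous)).add
        continuous_const).intervalIntegrable A B
    rw [← intervalIntegral.integral_sub i1 i2, ← intervalIntegral.integral_add (i1.sub i2) i3]
    refine intervalIntegral.integral_congr fun x _ => ?_
    simp only [excess]
    ring
  have h5 : (∫ x in A..B, excess a (U l x) (φ x)) - η / 4
      ≤ ∫ x in A..B, excess a (U l x) (Φ l x) := by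
    have e : (∫ x in A..B, (excess a (U l x) (φ x) - η / (4 * (B - A + 1)))) ≤
        ∫ x in A..B, excess a (U l x) (Φ l x) := by
      refine intervalIntegral.integral_mono_on hAB
        ((intervalIntegrable_excess a (hU l) hφ A B).sub intervalIntegrable_const)
        (intervalIntegrable_excess a (hU l) (hΦ l) A B) fun x _ => ?_
      have m1 := (abs_le.1 (excess_lipschitz a ((hU l).2 x) (φ x) (Φ l x))).2
      have m2 := k4 x
      rw [Real.dist_eq] at m2
      linarith
    rw [intervalIntegral.integral_sub (intervalIntegrable_excess a (hU l) hφ A B)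
      intervalIntegrable_const, intervalIntegral.integral_const, smul_eq_mul] at e
    have e2 : (B - A) * (η / (4 * (B - A + 1))) ≤ η / 4 := by
      rw [← mul_div_assoc, div_le_div_iff₀ (by linarith) (by norm_num)]
      nlinarith
    linarith
  rw [hsplit u hu]
  rw [hsplit (U l) (hU l)] at h5
  linarith

/-- Energy bound for an admissible pair, sharp inside `(-M, M)` and calibrated outside. -/
lemma energy_window {um up l M : ℝ} (hsum : um + up = 1) {u φ : ℝ → ℝ} (hX : MemX um up u φ)
    (hB : Bdry um up l u φ) (hMl : M ≤ l) :
    (prim (cst (phiOf up)) (phiOf up) (φ (-M)) - prim (cst (phiOf up)) (phiOf up) (-phiOf up)) +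
      (prim (cst (phiOf up)) (phiOf up) (phiOf up) - prim (cst (phiOf up)) (phiOf up) (φ M)) +
      ∫ x in (-M)..M, dens (phiOf up) u φ x ≤ ∫ x in (-l)..l, dens (phiOf up) u φ x := by
  have hφ := hX.memC hsum
  have b1 := (hB.1 (-l) le_rfl).2
  have b2 := (hB.2 l le_rfl).2
  rw [phiOf_symm hsum] at b1
  have k1 := energy_lower hX.1 hφ (show -l ≤ -M by linarith)
  have k2 := energy_lower hX.1 hφ hMl
  have n1 := integral_excess_nonneg hX.1 hφ (show -l ≤ -M by linarith)
  have n2 := integral_excess_nonneg hX.1 hφ hMl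
  rw [b1] at k1
  rw [b2] at k2
  have i := intervalIntegrable_dens (phiOf up) hX.1 hφ
  rw [← intervalIntegral.integral_add_adjacent_intervals (i (-l) (-M)) (i (-M) l),
    ← intervalIntegral.integral_add_adjacent_intervals (i (-M) M) (i M l)]
  linarith

lemma continuous_prim_const (a : ℝ) : Continuous (prim (cst a) a) :=
  (continuous_prim (cst a)).comp (show Continuous fun y : ℝ => (a, y) by fun_prop)

/-- The energy in `(-M, M)`, corrected by the calibrated cost of reaching the limits, exceeds every
real number below `G` for some `M`. -/
lemma exists_window {um up : ℝ} (h0 : 0 < um) (h1 : um < up) (hsum : um + up = 1)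
    {u φ : ℝ → ℝ} (hX : MemX um up u φ) {K : ℝ} (hK : (K : EReal) < GE um up u φ) :
    ∃ M, 0 ≤ M ∧ K < (prim (cst (phiOf up)) (phiOf up) (φ (-M))
        - prim (cst (phiOf up)) (phiOf up) (-phiOf up)) +
      (prim (cst (phiOf up)) (phiOf up) (phiOf up) - prim (cst (phiOf up)) (phiOf up) (φ M)) +
      ∫ x in (-M)..M, dens (phiOf up) u φ x := by
  have hφ := hX.memC hsum
  by_cases hD : Dom um up u φ
  · rw [GE_of_dom h0 h1 hsum hD, EReal.coe_lt_coe_iff] at hK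
    have hi : Integrable (dens (phiOf up) u φ) volume :=
      (hD.integrable_excess h0 h1 hsum hX).add (hD.integrable_S h0 h1 hsum hX)
    have t1 := intervalIntegral_tendsto_integral hi tendsto_neg_atTop_atBot
      (tendsto_id (α := ℝ) (x := atTop))
    have t2 := ((continuous_prim_const (phiOf up)).tendsto _).comp
      (hφ.2.1.comp tendsto_neg_atTop_atBot)
    have t3 := ((continuous_prim_const (phiOf up)).tendsto _).comp hφ.2.2
    have t := ((t2.sub_const (prim (cst (phiOf up)) (phiOf up) (-phiOf up))).add
      (t3.const_sub (prim (cst (phiOf up)) (phiOf up) (phiOf up)))).add t1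
    simp only [sub_self, zero_add] at t
    obtain ⟨M, hM, hM0⟩ := ((t.eventually (lt_mem_nhds hK)).and (eventually_ge_atTop 0)).exists
    exact ⟨M, hM0, hM⟩
  · by_contra! hcon
    refine hD (dom_of_integrable_excess h0 h1 hsum hX ?_)
    have hm := (continuous_prim_const (phiOf up))
    refine integrable_of_intervalIntegral_norm_bounded (l := (atTop : Filter ℝ))
      (a := fun M => -M) (b := fun M => M)
      (2 * (K - (prim (cst (phiOf up)) (phiOf up) (phiOf up)
        - prim (cst (phiOf up)) (phiOf up) (-phiOf up))))
      (fun M => (intervalIntegrable_excess _ hX.1 hφ (-M) M).1)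
      tendsto_neg_atTop_atBot tendsto_id ?_
    filter_upwards [eventually_ge_atTop 0] with M hM
    have k := energy_lower hX.1 hφ (show -M ≤ M by linarith)
    have k2 := hcon M hM
    have e : ∫ x in (-M)..M, ‖excess (phiOf up) (u x) (φ x)‖
        = ∫ x in (-M)..M, excess (phiOf up) (u x) (φ x) := by
      refine intervalIntegral.integral_congr fun x _ => ?_
      simp only [Real.norm_eq_abs]
      exact abs_of_nonneg (excess_nonneg (hφ.mem_Icc x) (hX.1.2 x))
    rw [e]
    linarith

theorem gamma_liminf {um up : ℝ} (h0 : 0 < um) (h1 : um < up) (hsum : um + up = 1)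
    {u φ : ℝ → ℝ} (hX : MemX um up u φ) {U Φ : ℝ → ℝ → ℝ} (hXl : ∀ l, MemX um up (U l) (Φ l))
    (hc : ConvXFam U Φ u φ) :
    GE um up u φ ≤ Filter.liminf (fun l => Gl um up l (U l) (Φ l)) atTop := by
  refine le_of_forall_lt fun c hcG => ?_
  obtain ⟨K, hcK, hKG⟩ := EReal.lt_iff_exists_real_btwn.1 hcG
  refine hcK.trans_le ?_
  obtain ⟨M, hM, hKM⟩ := exists_window h0 h1 hsum hX hKG
  have hφ := hX.memC hsum
  set P := prim (cst (phiOf up)) (phiOf up) with hP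
  have hPc : Continuous P := continuous_prim_const _
  obtain ⟨η, hη, hηK⟩ : ∃ η : ℝ, 0 < η ∧ K + 2 * η < (P (φ (-M)) - P (-phiOf up)) +
      (P (phiOf up) - P (φ M)) + ∫ x in (-M)..M, dens (phiOf up) u φ x :=
    ⟨((P (φ (-M)) - P (-phiOf up)) + (P (phiOf up) - P (φ M)) +
      (∫ x in (-M)..M, dens (phiOf up) u φ x) - K) / 4, by linarith, by linarith⟩
  have e1 := energy_lsc hX.1 hφ (fun l => (hXl l).1)
    (fun l => (hXl l).memC hsum) hc (show -M ≤ M by linarith) hη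
  have t1 := ((hPc.tendsto _).comp (hc.2.tendsto_at (-M))).sub
    ((hPc.tendsto _).comp (hc.2.tendsto_at M))
  have e2 := t1.eventually (lt_mem_nhds (show P (φ (-M)) - P (φ M) - η
    < P (φ (-M)) - P (φ M) by linarith))
  refine le_liminf_of_le (by isBoundedDefault) ?_
  filter_upwards [e1, e2, eventually_ge_atTop M] with l k1 k2 hl
  by_cases hB : Bdry um up l (U l) (Φ l)
  · rw [Gl_of_bdry h0 h1 hsum (hM.trans hl) hB, EReal.coe_le_coe_iff]
    have k3 := energy_window hsum (hXl l) hB hl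
    rw [← hP] at k3
    simp only [Function.comp_apply] at k2
    linarith
  · rw [Gl_of_not_bdry hB]
    exact le_top


/-! ### The recovery sequence -/

/-- The truncated profile: `φ` is capped by the slope-one ramp leaving `-a` at `-l` and kept above
the slope-one ramp reaching `a` at `l`. -/
def trunc (a l : ℝ) (φ : ℝ → ℝ) (x : ℝ) : ℝ :=
  max (min (φ x) (-a + max (x + l) 0)) (a - max (l - x) 0)

lemma trunc_left {a l : ℝ} {φ : ℝ → ℝ} (hφ : MemC (-a) a φ) {x : ℝ} (h1 : x ≤ -l)
    (h2 : x ≤ l - 2 * a) : trunc a l φ x = -a := by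
  unfold trunc
  have m := hφ.mem_Icc x
  rw [max_eq_right (show x + l ≤ 0 by linarith), add_zero, min_eq_right m.1, max_eq_left]
  have := le_max_left (l - x) 0
  linarith

lemma trunc_right {a l : ℝ} {φ : ℝ → ℝ} (hφ : MemC (-a) a φ) {x : ℝ} (h1 : l ≤ x) :
    trunc a l φ x = a := by
  unfold trunc
  have m := hφ.mem_Icc x
  rw [max_eq_right (show l - x ≤ 0 by linarith), sub_zero, max_eq_right]
  exact (min_le_left _ _).trans m.2

lemma trunc_of_le {a l : ℝ} {φ : ℝ → ℝ} (hφ : MemC (-a) a φ) {x : ℝ} (h : x ≤ l - 2 * a) :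
    trunc a l φ x = min (φ x) (-a + max (x + l) 0) := by
  unfold trunc
  have m := hφ.mem_Icc x
  refine max_eq_left (le_min ?_ ?_)
  · have := le_max_left (l - x) 0
    linarith [m.1]
  · have := le_max_left (l - x) 0
    have := le_max_right (x + l) 0
    linarith

lemma trunc_of_ge {a l : ℝ} {φ : ℝ → ℝ} (hφ : MemC (-a) a φ) {x : ℝ} (h : -l + 2 * a ≤ x) :
    trunc a l φ x = max (φ x) (a - max (l - x) 0) := by
  unfold trunc
  have m := hφ.mem_Icc x
  rw [min_eq_left]
  have := le_max_left (x + l) 0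
  linarith [m.2]

lemma trunc_mid {a l : ℝ} {φ : ℝ → ℝ} (hφ : MemC (-a) a φ) {x : ℝ} (h1 : -l + 2 * a ≤ x)
    (h2 : x ≤ l - 2 * a) : trunc a l φ x = φ x := by
  rw [trunc_of_le hφ h2, min_eq_left]
  have m := hφ.mem_Icc x
  have := le_max_left (x + l) 0
  linarith [m.2]

lemma memC_trunc {a : ℝ} (l : ℝ) {φ : ℝ → ℝ} (hφ : MemC (-a) a φ) :
    MemC (-a) a (trunc a l φ) := by
  refine ⟨fun x y hxy => ?_, ?_, ?_⟩
  · obtain ⟨h1, h2⟩ := hφ.1 x y hxy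
    unfold trunc
    constructor
    · gcongr
    · rw [sub_le_iff_le_add]
      have e1 : max (y + l) 0 ≤ y - x + max (x + l) 0 :=
        max_le (by linarith [le_max_left (x + l) 0]) (by linarith [le_max_right (x + l) 0])
      have e2 : max (l - x) 0 ≤ y - x + max (l - y) 0 :=
        max_le (by linarith [le_max_left (l - y) 0]) (by linarith [le_max_right (l - y) 0])
      refine max_le ?_ ?_
      · refine le_trans ?_ (add_le_add_right (le_max_left _ _) _)
        rw [← sub_le_iff_le_add']
        refine le_min ?_ ?_
        · linarith [min_le_left (φ y) (-a + max (y + l) 0)]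
        · linarith [min_le_right (φ y) (-a + max (y + l) 0)]
      · refine le_trans ?_ (add_le_add_right (le_max_right _ _) _)
        linarith
  · refine tendsto_const_nhds.congr' ?_
    filter_upwards [eventually_le_atBot (-l), eventually_le_atBot (l - 2 * a)] with x k1 k2
    exact (trunc_left hφ k1 k2).symm
  · refine tendsto_const_nhds.congr' ?_
    filter_upwards [eventually_ge_atTop l] with x k1
    exact (trunc_right hφ k1).symm

lemma trunc_close {a l : ℝ} {φ : ℝ → ℝ} (hφ : MemC (-a) a φ) (hl : 2 * a ≤ l) (x : ℝ) :
    |trunc a l φ x - φ x| ≤ (φ (-l + 2 * a) + a) + (a - φ (l - 2 * a)) := by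
  have m := hφ.mem_Icc x
  have m1 := hφ.mem_Icc (-l + 2 * a)
  have m2 := hφ.mem_Icc (l - 2 * a)
  rcases le_total x (-l + 2 * a) with h | h
  · have k0 := min_le_left (φ x) (-a + max (x + l) 0)
    rw [trunc_of_le hφ (by linarith), abs_of_nonpos (by linarith)]
    have k := hφ.monotone h
    have : -a ≤ min (φ x) (-a + max (x + l) 0) :=
      le_min m.1 (by linarith [le_max_right (x + l) 0])
    linarith [m2.2]
  · rcases le_total x (l - 2 * a) with h' | h'
    · rw [trunc_mid hφ h h', sub_self, abs_zero]
      linarith [m1.1, m2.2]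
    · have k0 := le_max_left (φ x) (a - max (l - x) 0)
      rw [trunc_of_ge hφ h, abs_of_nonneg (by linarith)]
      have k := hφ.monotone h'
      have : max (φ x) (a - max (l - x) 0) ≤ a :=
        max_le m.2 (by linarith [le_max_right (l - x) 0])
      linarith [m1.1]

/-- The density of the recovery sequence: `u` inside `(-l, l)`, the boundary values outside. -/
def cut (um up l : ℝ) (u : ℝ → ℝ) (x : ℝ) : ℝ := if x ≤ -l then um else if l ≤ x then up else u x

lemma memU_cut {um up : ℝ} (h0 : 0 < um) (h1 : um < up) (h2 : up < 1) (l : ℝ) {u : ℝ → ℝ}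
    (hu : MemU u) : MemU (cut um up l u) := by
  refine ⟨Measurable.ite measurableSet_Iic measurable_const
    (Measurable.ite measurableSet_Ici measurable_const hu.1), fun x => ?_⟩
  unfold cut
  split_ifs
  · exact ⟨h0.le, (h1.trans h2).le⟩
  · exact ⟨(h0.trans h1).le, h2.le⟩
  · exact hu.2 x

lemma cut_mid (um up : ℝ) {l : ℝ} (u : ℝ → ℝ) {x : ℝ} (hx : x ∈ Ioo (-l) l) :
    cut um up l u x = u x := by
  unfold cut
  rw [if_neg (not_le.2 hx.1), if_neg (not_le.2 hx.2)]

lemma cut_weak {um up : ℝ} (h0 : 0 < um) (h1 : um < up) (h2 : up < 1) {u : ℝ → ℝ}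
    (hu : MemU u) {f : ℝ → ℝ} (hf : Integrable f volume) :
    Tendsto (fun l => ∫ x, cut um up l u x * f x) atTop (𝓝 (∫ x, u x * f x)) := by
  refine tendsto_integral_filter_of_dominated_convergence (fun x => |f x|) ?_ ?_ hf.abs ?_
  · exact Eventually.of_forall fun l =>
      (memU_cut h0 h1 h2 l hu).1.aestronglyMeasurable.mul hf.aestronglyMeasurable
  · refine Eventually.of_forall fun l => Eventually.of_forall fun x => ?_
    have m := (memU_cut h0 h1 h2 l hu).2 x
    rw [Real.norm_eq_abs, abs_mul, abs_of_nonneg m.1]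
    exact mul_le_of_le_one_left (abs_nonneg _) m.2
  · refine Eventually.of_forall fun x => tendsto_const_nhds.congr' ?_
    filter_upwards [eventually_gt_atTop |x|] with l hl
    rw [cut_mid um up u (abs_lt.1 hl)]

lemma bdry_recovery {um up l : ℝ} (hsum : um + up = 1) (hl0 : 0 < l) (hl : phiOf up ≤ l)
    {u φ : ℝ → ℝ} (hφ : MemC (-phiOf up) (phiOf up) φ) :
    Bdry um up l (cut um up l u) (trunc (phiOf up) l φ) := by
  refine ⟨fun x hx => ⟨?_, ?_⟩, fun x hx => ⟨?_, ?_⟩⟩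
  · unfold cut
    rw [if_pos hx]
  · rw [trunc_left hφ hx (by linarith), phiOf_symm hsum]
  · unfold cut
    rw [if_neg (by linarith), if_pos hx]
  · exact trunc_right hφ hx

/-- Upper bound for the energy of the recovery sequence: the truncation only acts in two layers of
fixed width `2a`, where the entropy of the slope is nonpositive. -/
lemma recovery_energy {um up a l : ℝ} (h0 : 0 < um) (h1 : um < up) (h2 : up < 1) (ha : 0 < a)
    {u φ : ℝ → ℝ} (hu : MemU u) (hφ : MemC (-a) a φ) (hl : 2 * a ≤ l) :
    ∫ x in (-l)..l, dens a (cut um up l u) (trunc a l φ) x ≤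
      (∫ x in (-l)..l, excess a (u x) (φ x)) +
        4 * a * ((φ (-l + 2 * a) + a) + (a - φ (l - 2 * a))) +
        ∫ x in (-(l - 2 * a))..(l - 2 * a), S (deriv φ x) := by
  set δ := (φ (-l + 2 * a) + a) + (a - φ (l - 2 * a)) with hδ
  have hU := memU_cut h0 h1 h2 l hu
  have hT := memC_trunc l hφ
  have i := intervalIntegrable_dens a hU hT
  have ie := intervalIntegrable_excess a hu hφ
  have layer : ∀ A B : ℝ, -l ≤ A → A ≤ B → B ≤ l →
      ∫ x in A..B, dens a (cut um up l u) (trunc a l φ) x ≤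
        (∫ x in A..B, excess a (u x) (φ x)) + (B - A) * δ := by
    intro A B hA hAB hB
    have e : (∫ x in A..B, (excess a (u x) (φ x) + δ)) =
        (∫ x in A..B, excess a (u x) (φ x)) + (B - A) * δ := by
      rw [intervalIntegral.integral_add (ie A B) intervalIntegrable_const,
        intervalIntegral.integral_const, smul_eq_mul]
    rw [← e]
    refine intervalIntegral.integral_mono_on_of_le_Ioo hAB (i A B)
      ((ie A B).add intervalIntegrable_const) fun x hx => ?_
    have m1 := (abs_le.1 (excess_lipschitz a (hu.2 x) (trunc a l φ x) (φ x))).2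
    have m2 := trunc_close hφ hl x
    have m3 := S_nonpos (hT.deriv_mem x)
    unfold dens
    rw [cut_mid um up u ⟨hA.trans_lt hx.1, hx.2.trans_le hB⟩]
    linarith
  have mid : ∫ x in (-(l - 2 * a))..(l - 2 * a), dens a (cut um up l u) (trunc a l φ) x ≤
      ∫ x in (-(l - 2 * a))..(l - 2 * a), dens a u φ x := by
    refine intervalIntegral.integral_mono_on_of_le_Ioo (by linarith) (i _ _)
      (intervalIntegrable_dens a hu hφ _ _) fun x hx => le_of_eq ?_
    have e : trunc a l φ =ᶠ[𝓝 x] φ := by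
      filter_upwards [isOpen_Ioo.mem_nhds hx] with y hy
      exact trunc_mid hφ (by linarith [hy.1]) (by linarith [hy.2])
    unfold dens
    rw [cut_mid um up u ⟨by linarith [hx.1], by linarith [hx.2]⟩, e.deriv_eq, e.eq_of_nhds]
  have k1 := layer (-l) (-(l - 2 * a)) le_rfl (by linarith) (by linarith)
  have k2 := layer (l - 2 * a) l (by linarith) (by linarith) le_rfl
  rw [integral_dens a hu hφ] at mid
  rw [← intervalIntegral.integral_add_adjacent_intervals (i (-l) (-(l - 2 * a))) (i _ l),
    ← intervalIntegral.integral_add_adjacent_intervals (i (-(l - 2 * a)) (l - 2 * a)) (i _ l),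
    ← intervalIntegral.integral_add_adjacent_intervals (ie (-l) (-(l - 2 * a))) (ie _ l),
    ← intervalIntegral.integral_add_adjacent_intervals (ie (-(l - 2 * a)) (l - 2 * a)) (ie _ l)]
  linarith

theorem gamma_limsup {um up : ℝ} (h0 : 0 < um) (h1 : um < up) (h2 : up < 1)
    (hsum : um + up = 1) {u φ : ℝ → ℝ} (hX : MemX um up u φ) :
    ∃ U Φ : ℝ → ℝ → ℝ, (∀ l, MemX um up (U l) (Φ l)) ∧ ConvXFam U Φ u φ ∧
      Filter.limsup (fun l => Gl um up l (U l) (Φ l)) atTop ≤ GE um up u φ := by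
  have hφ := hX.memC hsum
  have ha := phiOf_pos h0 h1 hsum
  set a := phiOf up with hadef
  have htop : Tendsto (fun l : ℝ => l - 2 * a) atTop atTop := tendsto_atTop_add_const_right _ _
    tendsto_id
  have hbot : Tendsto (fun l : ℝ => -(l - 2 * a)) atTop atBot := tendsto_neg_atTop_atBot.comp htop
  have hδ : Tendsto (fun l => (φ (-l + 2 * a) + a) + (a - φ (l - 2 * a))) atTop (𝓝 0) := by
    have t1 := (hφ.2.1.comp hbot).add_const a
    have t2 := (hφ.2.2.comp htop).const_sub a
    have t := t1.add t2
    simp only [neg_add_cancel, sub_self, add_zero, neg_sub] at t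
    refine t.congr fun l => ?_
    simp only [Function.comp_apply]
    rw [show 2 * a - l = -l + 2 * a by ring]
  refine ⟨fun l => cut um up l u, fun l => trunc a l φ, fun l => ⟨memU_cut h0 h1 h2 l hX.1, ?_⟩,
    ⟨fun f hf => cut_weak h0 h1 h2 hX.1 hf, ?_⟩, ?_⟩
  · rw [phiOf_symm hsum]
    exact memC_trunc l hφ
  · rw [Metric.tendstoUniformly_iff]
    intro ε hε
    filter_upwards [hδ.eventually (gt_mem_nhds hε), eventually_ge_atTop (2 * a)] with l k hl x
    rw [dist_comm, Real.dist_eq]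
    exact (trunc_close hφ hl x).trans_lt k
  · by_cases hD : Dom um up u φ
    · rw [GE_of_dom h0 h1 hsum hD, ← hadef]
      have hi := hD.integrable_excess h0 h1 hsum hX
      have hs := hD.integrable_S h0 h1 hsum hX
      have t1 := intervalIntegral_tendsto_integral hi tendsto_neg_atTop_atBot
        (tendsto_id (α := ℝ) (x := atTop))
      have t2 := intervalIntegral_tendsto_integral hs hbot htop
      have t := (t1.add (hδ.const_mul (4 * a))).add t2
      rw [mul_zero, add_zero, ← integral_add hi hs] at t
      have tE := (continuous_coe_real_ereal.tendsto _).comp t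
      refine le_trans (limsup_le_limsup ?_ (by isBoundedDefault) (by isBoundedDefault))
        tE.limsup_eq.le
      filter_upwards [eventually_ge_atTop (2 * a)] with l hl
      rw [Gl_of_bdry h0 h1 hsum (by linarith)
        (bdry_recovery hsum (by linarith) (by rw [← hadef]; linarith) hφ)]
      exact EReal.coe_le_coe_iff.2 (recovery_energy h0 h1 h2 ha hX.1 hφ hl)
    · rw [GE_of_not_dom hD]
      exact le_top


/-! ### The stationary solutions -/

lemma const_of_deriv_zero {f : ℝ → ℝ} {A B : ℝ} (hc : ContinuousOn f (Icc A B))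
    (hd : ∀ x ∈ Ioo A B, HasDerivAt f 0 x) {x : ℝ} (hx : x ∈ Icc A B) : f x = f A := by
  rcases hx.1.eq_or_lt with h | h
  · rw [h]
  obtain ⟨c, -, e⟩ := exists_hasDerivAt_eq_slope f (fun _ => 0) h
    (hc.mono (Icc_subset_Icc_right hx.2)) fun y hy => hd y ⟨hy.1, hy.2.trans_le hx.2⟩
  have := (div_eq_zero_iff.1 e.symm).resolve_right (by linarith)
  linarith

/-- A solution of the Riccati equation `v' = κ - v²` on `(-l, l)` with boundary values `∓ b` has
positive derivative, hence `κ > b²` and `|v| < √κ`. -/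
lemma riccati_pos {b l κ : ℝ} (hb : 0 < b) (hl : 0 < l) {v : ℝ → ℝ} (hc : Continuous v)
    (hm : v (-l) = -b) (hp : v l = b)
    (hd : ∀ x ∈ Ioo (-l) l, HasDerivAt v (κ - v x ^ 2) x) :
    ∀ x ∈ Icc (-l) l, 0 < κ - v x ^ 2 := by
  -- `y = κ - v²` solves the linear equation `y' = -2 v y`, so `y exp (∫ 2 v)` is constant.
  set w : ℝ → ℝ := fun x => (κ - v x ^ 2) * Real.exp (2 * ∫ t in (0:ℝ)..x, v t) with hw
  have hI : ∀ x, HasDerivAt (fun x => ∫ t in (0:ℝ)..x, v t) (v x) x := fun x =>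
    intervalIntegral.integral_hasDerivAt_right (hc.intervalIntegrable _ _)
      hc.stronglyMeasurable.stronglyMeasurableAtFilter hc.continuousAt
  have hwc : Continuous w := by
    have : Continuous fun x => ∫ t in (0:ℝ)..x, v t :=
      continuous_iff_continuousAt.2 fun x => (hI x).continuousAt
    fun_prop
  have hwd : ∀ x ∈ Ioo (-l) l, HasDerivAt w 0 x := by
    intro x hx
    have e := (((hd x hx).pow 2).const_sub κ).mul ((hI x).const_mul 2).exp
    refine e.congr_deriv ?_
    simp only [Pi.pow_apply]
    ring
  obtain ⟨c, hcm, hce⟩ := exists_hasDerivAt_eq_slope v (fun x => κ - v x ^ 2)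
    (show -l < l by linarith) hc.continuousOn hd
  have hcpos : 0 < κ - v c ^ 2 := by
    rw [hce, hp, hm]
    exact div_pos (by linarith) (by linarith)
  intro x hx
  have k1 := const_of_deriv_zero hwc.continuousOn hwd hx
  have k2 := const_of_deriv_zero hwc.continuousOn hwd (Ioo_subset_Icc_self hcm)
  have k3 : 0 < w x := by
    rw [k1, ← k2]
    exact mul_pos hcpos (Real.exp_pos _)
  exact (mul_pos_iff_of_pos_right (Real.exp_pos _)).1 k3

/-- The solution of the Riccati boundary value problem is `k tanh (k x)`, and `k` is exponentially
close to `b`. -/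
lemma riccati_tanh {b l κ : ℝ} (hb : 0 < b) (hl : 0 < l) {v : ℝ → ℝ} (hc : Continuous v)
    (hm : v (-l) = -b) (hp : v l = b)
    (hd : ∀ x ∈ Ioo (-l) l, HasDerivAt v (κ - v x ^ 2) x) :
    ∃ k, b ≤ k ∧ k - b ≤ (k + b) * Real.exp (-(2 * b * l)) ∧
      ∀ x ∈ Icc (-l) l, v x = k * Real.tanh (k * x) := by
  have hpos := riccati_pos hb hl hc hm hp hd
  have hκb := hpos l ⟨by linarith, le_rfl⟩
  rw [hp] at hκb
  have hκ : 0 < κ := by nlinarith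
  set k := Real.sqrt κ with hk
  have hk2 : k ^ 2 = κ := Real.sq_sqrt hκ.le
  have hk0 : 0 < k := Real.sqrt_pos.2 hκ
  have hbk : b < k := by nlinarith
  have hv : ∀ x ∈ Icc (-l) l, -k < v x ∧ v x < k := fun x hx =>
    abs_lt.1 (abs_lt_of_sq_lt_sq (by linarith [hpos x hx]) hk0.le)
  set E : ℝ → ℝ := fun x => (k + v x) / (k - v x) * Real.exp (-(2 * k * x)) with hE
  have hEc : ContinuousOn E (Icc (-l) l) := by
    refine ContinuousOn.mul (ContinuousOn.div (by fun_prop) (by fun_prop) fun x hx => ?_)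
      (by fun_prop)
    linarith [(hv x hx).2]
  have hEd : ∀ x ∈ Ioo (-l) l, HasDerivAt E 0 x := by
    intro x hx
    have n : k - v x ≠ 0 := by linarith [(hv x (Ioo_subset_Icc_self hx)).2]
    have e1 := (((hd x hx).const_add k).div ((hd x hx).const_sub k) n).mul
      (((hasDerivAt_id x).const_mul (2 * k)).neg.exp)
    refine e1.congr_deriv ?_
    simp only [Pi.div_apply, id, Pi.neg_apply]
    rw [← hk2]
    field_simp
    ring
  have hC : ∀ x ∈ Icc (-l) l, E x = E (-l) := fun x hx => const_of_deriv_zero hEc hEd hx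
  have hmem : l ∈ Icc (-l) l := ⟨by linarith, le_rfl⟩
  -- The boundary values are opposite, so `E l * E (-l) = 1` and the constant is `1`.
  have hE1 : E (-l) = 1 := by
    have p : E l * E (-l) = 1 := by
      have n1 : k - b ≠ 0 := by linarith
      have n2 : k + b ≠ 0 := by linarith
      have n3 : Real.exp (-(2 * k * l)) * Real.exp (-(2 * k * -l)) = 1 := by
        rw [← Real.exp_add]; simp
      simp only [hE, hp, hm]
      calc _ = ((k + b) / (k - b) * ((k + -b) / (k - -b))) *
            (Real.exp (-(2 * k * l)) * Real.exp (-(2 * k * -l))) := by ring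
        _ = 1 := by
          rw [n3, sub_neg_eq_add, ← sub_eq_add_neg]
          field_simp
    rw [hC l hmem] at p
    have q : 0 ≤ E (-l) := by
      simp only [hE, hm]
      exact mul_nonneg (div_nonneg (by linarith) (by linarith)) (Real.exp_pos _).le
    nlinarith
  have key : ∀ x ∈ Icc (-l) l, (k + v x) * Real.exp (-(2 * k * x)) = k - v x := by
    intro x hx
    have e := (hC x hx).trans hE1
    have n : k - v x ≠ 0 := by linarith [(hv x hx).2]
    simp only [hE] at e
    rwa [div_mul_eq_mul_div, div_eq_one_iff_eq n] at e
  refine ⟨k, hbk.le, ?_, fun x hx => ?_⟩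
  · have e := key l hmem
    rw [hp] at e
    rw [← e]
    refine mul_le_mul_of_nonneg_left (Real.exp_le_exp.2 ?_) (by linarith)
    nlinarith
  · have e := key x hx
    have e1 : Real.exp (-(2 * k * x)) = Real.exp (-(k * x)) * Real.exp (-(k * x)) := by
      rw [← Real.exp_add]; congr 1; ring
    have e2 : Real.exp (-(k * x)) * Real.exp (k * x) = 1 := by
      rw [← Real.exp_add]; simp
    have p1 := Real.exp_pos (k * x)
    have p2 := Real.exp_pos (-(k * x))
    rw [e1] at e
    rw [Real.tanh_eq, ← mul_div_assoc, eq_div_iff (by positivity)]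
    have e3 : (k + v x) * Real.exp (-(k * x)) = (k - v x) * Real.exp (k * x) := by
      rw [← e]
      linear_combination (-(k + v x) * Real.exp (-(k * x))) * e2
    linear_combination e3

lemma tanh_profile_close_aux {b k x : ℝ} (hb : 0 < b) (hbk : b ≤ k) (hx : 0 ≤ x) :
    |k * Real.tanh (k * x) - b * Real.tanh (b * x)| ≤ 5 * (k - b) := by
  have ht : 0 ≤ (k - b) * x := mul_nonneg (by linarith) hx
  have hp : 0 ≤ k * x := mul_nonneg (by linarith) hx
  have hq : 0 ≤ b * x := mul_nonneg hb.le hx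
  have c1 := Real.cosh_pos (k * x)
  have c2 := Real.cosh_pos (b * x)
  have e1 : Real.tanh (k * x) - Real.tanh (b * x) =
      Real.sinh ((k - b) * x) / (Real.cosh (k * x) * Real.cosh (b * x)) := by
    rw [Real.tanh_eq_sinh_div_cosh, Real.tanh_eq_sinh_div_cosh, div_sub_div _ _ c1.ne' c2.ne',
      sub_mul, Real.sinh_sub]
  have s0 : 0 ≤ Real.sinh ((k - b) * x) := Real.sinh_nonneg_iff.2 ht
  have s1 : Real.sinh ((k - b) * x) ≤ 2 * ((k - b) * x) * Real.cosh (k * x) := by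
    have a1 : Real.sinh ((k - b) * x) ≤ (k - b) * x * Real.exp ((k - b) * x) := by
      have a2 := Real.add_one_le_exp (-(2 * ((k - b) * x)))
      have a3 : Real.exp (-((k - b) * x)) =
          Real.exp ((k - b) * x) * Real.exp (-(2 * ((k - b) * x))) := by
        rw [← Real.exp_add]; congr 1; ring
      rw [Real.sinh_eq, a3]
      nlinarith [Real.exp_pos ((k - b) * x)]
    have a4 : Real.exp ((k - b) * x) ≤ 2 * Real.cosh (k * x) := by
      have := Real.exp_le_exp.2 (show (k - b) * x ≤ k * x by nlinarith)
      rw [Real.cosh_eq]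
      linarith [Real.exp_pos (-(k * x))]
    nlinarith
  have s2 : b * x ≤ 2 * Real.cosh (b * x) := by
    rw [Real.cosh_eq]
    linarith [Real.exp_pos (-(b * x)), Real.add_one_le_exp (b * x)]
  have d0 : 0 ≤ Real.tanh (k * x) - Real.tanh (b * x) := by rw [e1]; positivity
  have d1 : b * (Real.tanh (k * x) - Real.tanh (b * x)) ≤ 4 * (k - b) := by
    rw [e1, ← mul_div_assoc, div_le_iff₀ (by positivity)]
    calc b * Real.sinh ((k - b) * x) ≤ b * (2 * ((k - b) * x) * Real.cosh (k * x)) :=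
          mul_le_mul_of_nonneg_left s1 hb.le
      _ = 2 * (k - b) * Real.cosh (k * x) * (b * x) := by ring
      _ ≤ 2 * (k - b) * Real.cosh (k * x) * (2 * Real.cosh (b * x)) :=
          mul_le_mul_of_nonneg_left s2 (mul_nonneg (by linarith) c1.le)
      _ = _ := by ring
  have d2 := abs_lt.1 (Real.abs_tanh_lt_one (k * x))
  have d3 : 0 ≤ b * (Real.tanh (k * x) - Real.tanh (b * x)) := mul_nonneg hb.le d0
  rw [abs_le]
  constructor <;> nlinarith

lemma tanh_profile_close {b k : ℝ} (hb : 0 < b) (hbk : b ≤ k) (x : ℝ) :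
    |k * Real.tanh (k * x) - b * Real.tanh (b * x)| ≤ 5 * (k - b) := by
  rcases le_total 0 x with h | h
  · exact tanh_profile_close_aux hb hbk h
  · have e := tanh_profile_close_aux hb hbk (show 0 ≤ -x by linarith)
    rw [mul_neg, mul_neg, Real.tanh_neg, Real.tanh_neg, mul_neg, mul_neg, neg_sub_neg,
      abs_sub_comm] at e
    exact e

lemma tanh_tail {b l x : ℝ} (hb : 0 < b) (h : l ≤ x) :
    |b - b * Real.tanh (b * x)| ≤ 2 * b * Real.exp (-(2 * b * l)) := by
  have p1 := Real.exp_pos (b * x)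
  have p2 := Real.exp_pos (-(b * x))
  have e : 1 - Real.tanh (b * x) = 2 * Real.exp (-(b * x)) /
      (Real.exp (b * x) + Real.exp (-(b * x))) := by
    rw [Real.tanh_eq]; field_simp; ring
  have e0 : 0 ≤ 1 - Real.tanh (b * x) := by rw [e]; positivity
  have e1 : 1 - Real.tanh (b * x) ≤ 2 * Real.exp (-(2 * b * l)) := by
    have m := Real.exp_le_exp.2 (show -(2 * b * x) ≤ -(2 * b * l) by nlinarith)
    have a3 : Real.exp (-(b * x)) = Real.exp (b * x) * Real.exp (-(2 * b * x)) := by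
      rw [← Real.exp_add]; congr 1; ring
    rw [e, div_le_iff₀ (by positivity)]
    nlinarith [Real.exp_pos (-(2 * b * l))]
  rw [show b - b * Real.tanh (b * x) = b * (1 - Real.tanh (b * x)) by ring,
    abs_of_nonneg (mul_nonneg hb.le e0)]
  nlinarith

/-- The stationary solutions converge uniformly, exponentially fast, to the standing wave. -/
lemma stationary_close {b l κ : ℝ} (hb : 0 < b) (hl : 0 < l) {v : ℝ → ℝ} (hc : Continuous v)
    (hm : ∀ x ≤ -l, v x = -b) (hp : ∀ x, l ≤ x → v x = b)
    (hd : ∀ x ∈ Ioo (-l) l, HasDerivAt v (κ - v x ^ 2) x)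
    (hsmall : Real.exp (-(2 * b * l)) ≤ 1 / 2) (x : ℝ) :
    |v x - b * Real.tanh (b * x)| ≤ 20 * b * Real.exp (-(2 * b * l)) := by
  have hpos := Real.exp_pos (-(2 * b * l))
  have hbpos : 0 ≤ b * Real.exp (-(2 * b * l)) := by positivity
  rcases le_total x (-l) with h | h
  · have e := tanh_tail hb (show l ≤ -x by linarith)
    rw [mul_neg b x, Real.tanh_neg] at e
    rw [hm x h, ← abs_neg, show -(-b - b * Real.tanh (b * x)) = b - b * -Real.tanh (b * x) by ring]
    linarith
  rcases le_total l x with h' | h'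
  · have e := tanh_tail hb h'
    rw [hp x h']
    linarith
  · obtain ⟨k, hbk, hk, hv⟩ := riccati_tanh hb hl hc (hm _ le_rfl) (hp _ le_rfl) hd
    rw [hv x ⟨h, h'⟩]
    have e := tanh_profile_close hb hbk x
    have : k - b ≤ 4 * (b * Real.exp (-(2 * b * l))) := by nlinarith
    linarith

lemma phiOf_lipschitz {m : ℝ} (hm : 0 < m) {p q : ℝ} (hp : p ∈ Icc m (1 - m))
    (hq : q ∈ Icc m (1 - m)) : |phiOf p - phiOf q| ≤ 2 / m * |p - q| := by
  have aux : ∀ p q : ℝ, m ≤ p → m ≤ q → |Real.log p - Real.log q| ≤ 1 / m * |p - q| := by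
    have one : ∀ p q : ℝ, m ≤ p → m ≤ q → Real.log p - Real.log q ≤ 1 / m * |p - q| := by
      intro p q hp hq
      have p0 : 0 < p := hm.trans_le hp
      have q0 : 0 < q := hm.trans_le hq
      rw [← Real.log_div p0.ne' q0.ne']
      have h := Real.log_le_sub_one_of_pos (div_pos p0 q0)
      have h2 : p / q - 1 = 1 / q * (p - q) := by field_simp
      have h3 : 1 / q * (p - q) ≤ 1 / q * |p - q| :=
        mul_le_mul_of_nonneg_left (le_abs_self _) (by positivity)
      have h4 : 1 / q * |p - q| ≤ 1 / m * |p - q| :=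
        mul_le_mul_of_nonneg_right (one_div_le_one_div_of_le hm hq) (abs_nonneg _)
      linarith
    intro p q hp hq
    have h1 := one p q hp hq
    have h2 := one q p hq hp
    rw [abs_sub_comm q p] at h2
    exact abs_le.2 ⟨by linarith, h1⟩
  have split : ∀ p : ℝ, p ∈ Icc m (1 - m) → phiOf p = Real.log p - Real.log (1 - p) := by
    intro p hp
    exact Real.log_div (by linarith [hp.1]) (by linarith [hp.2])
  rw [split p hp, split q hq]
  have a1 := aux p q hp.1 hq.1
  have a2 := aux (1 - p) (1 - q) (by linarith [hp.2]) (by linarith [hq.2])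
  rw [show 1 - p - (1 - q) = -(p - q) by ring, abs_neg] at a2
  have a3 := abs_sub (Real.log p - Real.log q) (Real.log (1 - p) - Real.log (1 - q))
  rw [show Real.log p - Real.log (1 - p) - (Real.log q - Real.log (1 - q)) =
    Real.log p - Real.log q - (Real.log (1 - p) - Real.log (1 - q)) by ring]
  have : 2 / m * |p - q| = 1 / m * |p - q| + 1 / m * |p - q| := by ring
  linarith

theorem minimizers_conv {um up : ℝ} (h0 : 0 < um) (h1 : um < up) (hsum : um + up = 1)
    {Ub : ℝ → ℝ → ℝ} (hUb : ∀ l, 0 < l →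
        Continuous (Ub l) ∧ (∀ x ≤ -l, Ub l x = um) ∧ (∀ x, l ≤ x → Ub l x = up) ∧
        (∀ x ∈ Ioo (-l) l, Ub l x ∈ Ioo (0:ℝ) 1) ∧
        (∃ J : ℝ, ∀ x ∈ Ioo (-l) l,
          HasDerivAt (Ub l) (Ub l x * (1 - Ub l x) - J) x)) :
    ConvXFam Ub (fun l x => phiOf (Ub l x)) (ubarStanding up)
      (fun x => phiOf (ubarStanding up x)) := by
  set b := up - 1 / 2 with hbdef
  have hb : 0 < b := by rw [hbdef]; linarith
  have hεlim : Tendsto (fun l => 20 * b * Real.exp (-(2 * b * l))) atTop (𝓝 0) := by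
    have t : Tendsto (fun l : ℝ => -(2 * b * l)) atTop atBot :=
      tendsto_neg_atTop_atBot.comp (tendsto_id.const_mul_atTop (by positivity))
    simpa using (Real.tendsto_exp_atBot.comp t).const_mul (20 * b)
  have hclose : ∀ᶠ l in atTop, ∀ x,
      |Ub l x - ubarStanding up x| ≤ 20 * b * Real.exp (-(2 * b * l)) := by
    have t : Tendsto (fun l : ℝ => Real.exp (-(2 * b * l))) atTop (𝓝 0) :=
      Real.tendsto_exp_atBot.comp
        (tendsto_neg_atTop_atBot.comp (tendsto_id.const_mul_atTop (by positivity)))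
    filter_upwards [eventually_gt_atTop 0, t.eventually (gt_mem_nhds one_half_pos)] with l hl hs x
    obtain ⟨c, hm, hp, -, J, hJ⟩ := hUb l hl
    have e := stationary_close (v := fun x => Ub l x - 1 / 2) (κ := 1 / 4 - J) hb hl
      (c.sub continuous_const) (fun x hx => by rw [hm x hx, hbdef]; linarith)
      (fun x hx => by rw [hp x hx])
      (fun x hx => ((hJ x hx).sub_const (1 / 2)).congr_deriv (by ring)) hs.le x
    unfold ubarStanding
    rw [← hbdef]
    convert e using 2
    ring
  have hbar : ∀ x, ubarStanding up x ∈ Icc um up := by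
    intro x
    have := abs_lt.1 (Real.abs_tanh_lt_one (b * x))
    unfold ubarStanding
    rw [← hbdef]
    constructor <;> nlinarith
  have hbarc : Continuous (ubarStanding up) := by
    have : Continuous Real.tanh := by
      rw [show Real.tanh = fun x => Real.sinh x / Real.cosh x from
        funext Real.tanh_eq_sinh_div_cosh]
      exact Real.continuous_sinh.div Real.continuous_cosh fun x => (Real.cosh_pos x).ne'
    unfold ubarStanding
    fun_prop
  have hnear : ∀ᶠ l in atTop, ∀ x, Ub l x ∈ Icc (um / 2) (1 - um / 2) := by
    filter_upwards [hclose, hεlim.eventually (gt_mem_nhds (half_pos h0))] with l hl hs x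
    have k1 := abs_le.1 (hl x)
    have k2 := hbar x
    exact ⟨by linarith [k2.1], by linarith [k2.2]⟩
  constructor
  · intro f hf
    rw [tendsto_iff_norm_sub_tendsto_zero]
    have t := hεlim.mul_const (∫ x, |f x|)
    rw [zero_mul] at t
    refine squeeze_zero' (Eventually.of_forall fun _ => norm_nonneg _) ?_ t
    filter_upwards [hclose, hnear, eventually_gt_atTop 0] with l k1 k2 hl
    have i1 : Integrable (fun x => Ub l x * f x) volume := by
      refine hf.bdd_mul (c := 1) (hUb l hl).1.aestronglyMeasurable ?_
      refine Eventually.of_forall fun x => ?_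
      rw [Real.norm_eq_abs, abs_le]
      constructor <;> linarith [(k2 x).1, (k2 x).2]
    have i2 : Integrable (fun x => ubarStanding up x * f x) volume := by
      refine hf.bdd_mul (c := 1) hbarc.aestronglyMeasurable ?_
      refine Eventually.of_forall fun x => ?_
      rw [Real.norm_eq_abs, abs_le]
      constructor <;> linarith [(hbar x).1, (hbar x).2]
    rw [← integral_sub i1 i2, ← integral_const_mul]
    refine norm_integral_le_of_norm_le (hf.abs.const_mul _) (Eventually.of_forall fun x => ?_)
    rw [← sub_mul, norm_mul, Real.norm_eq_abs, Real.norm_eq_abs]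
    exact mul_le_mul_of_nonneg_right (k1 x) (abs_nonneg _)
  · rw [Metric.tendstoUniformly_iff]
    intro ε hε
    have t := hεlim.const_mul (2 / (um / 2))
    rw [mul_zero] at t
    filter_upwards [hclose, hnear, t.eventually (gt_mem_nhds hε)] with l k1 k2 k3 x
    rw [dist_comm, Real.dist_eq]
    have m := hbar x
    have e := phiOf_lipschitz (half_pos h0) (k2 x)
      (show ubarStanding up x ∈ Icc (um / 2) (1 - um / 2) from
        ⟨by linarith [m.1], by linarith [m.2]⟩)
    exact (e.trans (mul_le_mul_of_nonneg_left (k1 x) (by positivity))).trans_lt k3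

/-- For `u₋ + u₊ = 1` the family `{G_ℓ}_{ℓ>0}` Γ-converges to `G` on `X` as
`ℓ → ∞`, and the unique minimizer `(ū_ℓ, φ̄_ℓ)` of `G_ℓ` converges in `X` to `(ū, φ̄)`. -/
theorem stmt_14 (um up : ℝ) (h0 : 0 < um) (h1 : um < up) (h2 : up < 1)
    (hsum : um + up = 1) :
    -- Γ-liminf inequality
    (∀ u φ : ℝ → ℝ, MemX um up u φ →
      ∀ U Φ : ℝ → ℝ → ℝ, (∀ l, MemX um up (U l) (Φ l)) → ConvXFam U Φ u φ →
        GE um up u φ ≤ Filter.liminf (fun l => Gl um up l (U l) (Φ l)) atTop) ∧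
    -- Γ-limsup inequality
    (∀ u φ : ℝ → ℝ, MemX um up u φ →
      ∃ U Φ : ℝ → ℝ → ℝ, (∀ l, MemX um up (U l) (Φ l)) ∧ ConvXFam U Φ u φ ∧
        Filter.limsup (fun l => Gl um up l (U l) (Φ l)) atTop ≤ GE um up u φ) ∧
    -- convergence of the minimizers (ū_ℓ, φ̄_ℓ) to (ū, φ̄)
    (∀ Ub : ℝ → ℝ → ℝ,
      (∀ l, 0 < l →
        Continuous (Ub l) ∧ (∀ x ≤ -l, Ub l x = um) ∧ (∀ x, l ≤ x → Ub l x = up) ∧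
        (∀ x ∈ Ioo (-l) l, Ub l x ∈ Ioo (0:ℝ) 1) ∧
        (∃ J : ℝ, ∀ x ∈ Ioo (-l) l,
          HasDerivAt (Ub l) (Ub l x * (1 - Ub l x) - J) x)) →
      ConvXFam Ub (fun l x => phiOf (Ub l x)) (ubarStanding up)
        (fun x => phiOf (ubarStanding up x))) := by
  exact ⟨fun u φ hX U Φ hXl hc => gamma_liminf h0 h1 hsum hX hXl hc,
    fun u φ hX => gamma_limsup h0 h1 h2 hsum hX,
    fun Ub hUb => minimizers_conv h0 h1 hsum hUb⟩

end
end

section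
/- Let α ∈ (0,1) and u_± = (1±α)/2. For ℓ>0 let J_ℓ be the unique constant satisfying ∫_{u_-}^{u_+} dr/(r(1−r)−J_ℓ) = 2ℓ, and set J = (1−α²)/4. Then lim_{ℓ→∞} e^{αℓ}(J − J_ℓ) = α². -/
/-!
Put `b = √(1 - 4 J_ℓ) > α`. Then `r (1 - r) - J_ℓ = (b/2)² - (r - 1/2)²`, so partial fractions turn
the defining relation into `log ((b + α) / (b - α)) = b ℓ`, that is `b - α = (b + α) e^{-bℓ}`.
Consequently `J - J_ℓ = (b² - α²)/4 = (b + α)² e^{-bℓ} / 4` and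
`e^{αℓ} (J - J_ℓ) = ((b + α)² / 4) e^{-(b - α) ℓ}`. The limit `α²` follows from `b → α`
and `(b - α) ℓ → 0`. The first holds because `log (1 + x) ≤ x` gives `b - α ≤ 2 / ℓ`; the second
because `(b - α) ℓ = (b + α) ℓ e^{-bℓ} ≤ (b + α) ℓ e^{-αℓ}`.
-/

open MeasureTheory Real Filter Topology Set
open scoped Classical

noncomputable section

/-- The integral defining the current, with the current written as `(1 - b²)/4`; an antiderivative
of the integrand is `(1/b) (log (b/2 + (r - 1/2)) - log (b/2 - (r - 1/2)))`. -/
lemma integral_inv_eq_log {a b : ℝ} (ha : 0 < a) (hab : a < b) :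
    (∫ r in ((1-a)/2)..((1+a)/2), (r * (1 - r) - (1 - b^2)/4)⁻¹)
      = 2 / b * Real.log ((b + a) / (b - a)) := by
  have hb : 0 < b := ha.trans hab
  have hle : (1-a)/2 ≤ (1+a)/2 := by linarith
  have hfac : ∀ r : ℝ, r * (1 - r) - (1 - b^2)/4 = (b/2 + (r - 1/2)) * (b/2 - (r - 1/2)) := by
    intro r; ring
  have hpos : ∀ r ∈ uIcc ((1-a)/2) ((1+a)/2), 0 < b/2 + (r - 1/2) ∧ 0 < b/2 - (r - 1/2) := by
    intro r hr
    rw [uIcc_of_le hle] at hr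
    constructor <;> linarith [hr.1, hr.2]
  have hder : ∀ r ∈ uIcc ((1-a)/2) ((1+a)/2),
      HasDerivAt (fun r => 1 / b * (Real.log (b/2 + (r - 1/2)) - Real.log (b/2 - (r - 1/2))))
        ((r * (1 - r) - (1 - b^2)/4)⁻¹) r := by
    intro r hr
    obtain ⟨h1, h2⟩ := hpos r hr
    have d := (hasDerivAt_id r).sub_const (1/2)
    have d1 := (d.const_add (b/2)).log h1.ne'
    have d2 := (d.const_sub (b/2)).log h2.ne'
    refine ((d1.sub d2).const_mul (1/b)).congr_deriv ?_
    rw [hfac]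
    simp only [id]
    generalize hx : b/2 + (r - 1/2) = x at *
    generalize hy : b/2 - (r - 1/2) = y at *
    have hxy : b = x + y := by rw [← hx, ← hy]; ring
    have : x + y ≠ 0 := by positivity
    rw [hxy]
    field_simp
    ring
  have hcont : ContinuousOn (fun r : ℝ => (r * (1 - r) - (1 - b^2)/4)⁻¹)
      (uIcc ((1-a)/2) ((1+a)/2)) := by
    refine ContinuousOn.inv₀ (by fun_prop) fun r hr => ?_
    obtain ⟨h1, h2⟩ := hpos r hr
    rw [hfac]
    positivity
  rw [intervalIntegral.integral_eq_sub_of_hasDerivAt hder hcont.intervalIntegrable]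
  have e1 : b/2 + ((1+a)/2 - 1/2) = (b + a)/2 := by ring
  have e2 : b/2 - ((1+a)/2 - 1/2) = (b - a)/2 := by ring
  have e3 : b/2 + ((1-a)/2 - 1/2) = (b - a)/2 := by ring
  have e4 : b/2 - ((1-a)/2 - 1/2) = (b + a)/2 := by ring
  have h1 : b + a ≠ 0 := by positivity
  have h2 : b - a ≠ 0 := (sub_pos.2 hab).ne'
  rw [e1, e2, e3, e4, Real.log_div h1 h2, Real.log_div h1 two_ne_zero,
    Real.log_div h2 two_ne_zero]
  ring

/-- Lemma on the current. Let `α ∈ (0,1)`, `u_± = (1±α)/2`, and for `ℓ > 0`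
let `J_ℓ` be the constant with `∫_{u₋}^{u₊} dr/(r(1-r)-J_ℓ) = 2ℓ`, and `J = (1-α²)/4`.
Then `lim_{ℓ→∞} e^{αℓ}(J - J_ℓ) = α²`. -/
theorem stmt_15 (α : ℝ) (hα : α ∈ Ioo (0:ℝ) 1) (Jl : ℝ → ℝ)
    (hJl : ∀ l, 0 < l → Jl l < (1 - α^2)/4 ∧
      (∫ r in ((1-α)/2)..((1+α)/2), (r * (1 - r) - Jl l)⁻¹) = 2 * l) :
    Tendsto (fun l => Real.exp (α * l) * ((1 - α^2)/4 - Jl l)) atTop (𝓝 (α^2)) := by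
  obtain ⟨ha, -⟩ := hα
  set b : ℝ → ℝ := fun l => √(1 - 4 * Jl l) with hbdef
  have hsq : ∀ l, 0 < l → b l ^ 2 = 1 - 4 * Jl l := by
    intro l hl
    exact Real.sq_sqrt (by nlinarith [(hJl l hl).1])
  have hab : ∀ l, 0 < l → α < b l := by
    intro l hl
    exact Real.lt_sqrt_of_sq_lt (by linarith [(hJl l hl).1])
  have hlog : ∀ l, 0 < l → Real.log ((b l + α) / (b l - α)) = b l * l := by
    intro l hl
    have hb : 0 < b l := ha.trans (hab l hl)
    have hJ : Jl l = (1 - b l ^ 2) / 4 := by rw [hsq l hl]; ring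
    have h := (hJl l hl).2
    rw [hJ, integral_inv_eq_log ha (hab l hl)] at h
    field_simp at h
    linarith
  have hexp : ∀ l, 0 < l → b l - α = (b l + α) * Real.exp (-(b l * l)) := by
    intro l hl
    have h1 : 0 < b l - α := sub_pos.2 (hab l hl)
    have h2 : 0 < b l + α := by linarith
    rw [← hlog l hl, Real.exp_neg, Real.exp_log (by positivity)]
    field_simp
  have hbound : ∀ l, 0 < l → b l ≤ α + 2 / l := by
    intro l hl
    have h1 : 0 < b l - α := sub_pos.2 (hab l hl)
    have h2 : 0 < b l + α := by linarith
    have h3 := Real.log_le_sub_one_of_pos (show 0 < (b l + α) / (b l - α) by positivity)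
    have h4 : (b l + α) / (b l - α) - 1 = 2 * α / (b l - α) := by
      field_simp
      ring
    rw [hlog l hl, h4, le_div_iff₀ h1] at h3
    have h5 : α * ((b l - α) * l) ≤ α * 2 := by
      nlinarith [mul_pos h1 hl, mul_pos (mul_pos h1 hl) h1]
    have h6 : b l - α ≤ 2 / l := (le_div_iff₀ hl).2 (le_of_mul_le_mul_left h5 ha)
    linarith
  have hblim : Tendsto b atTop (𝓝 α) := by
    have hu : Tendsto (fun l : ℝ => α + 2 / l) atTop (𝓝 α) := by
      simpa using tendsto_const_nhds.add (tendsto_id.const_div_atTop (2:ℝ))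
    refine tendsto_of_tendsto_of_tendsto_of_le_of_le' tendsto_const_nhds hu ?_ ?_
    · filter_upwards [eventually_gt_atTop 0] with l hl using (hab l hl).le
    · filter_upwards [eventually_gt_atTop 0] with l hl using hbound l hl
  have hdecay : Tendsto (fun l : ℝ => l * Real.exp (-α * l)) atTop (𝓝 0) := by
    simpa using tendsto_rpow_mul_exp_neg_mul_atTop_nhds_zero 1 α ha
  have hprod : Tendsto (fun l => (b l - α) * l) atTop (𝓝 0) := by
    have hu : Tendsto (fun l => (b l + α) * (l * Real.exp (-α * l))) atTop (𝓝 0) := by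
      simpa using (hblim.add_const α).mul hdecay
    refine tendsto_of_tendsto_of_tendsto_of_le_of_le' tendsto_const_nhds hu ?_ ?_
    · filter_upwards [eventually_gt_atTop 0] with l hl
      exact mul_nonneg (sub_pos.2 (hab l hl)).le hl.le
    · filter_upwards [eventually_gt_atTop 0] with l hl
      have h2 : 0 < b l + α := by linarith [hab l hl]
      rw [hexp l hl, mul_assoc, mul_comm (Real.exp _) l]
      gcongr
      nlinarith [hab l hl]
  have hmain : Tendsto (fun l => (b l + α) ^ 2 / 4 * Real.exp (-((b l - α) * l))) atTop
      (𝓝 (α ^ 2)) := by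
    have h := (((hblim.add_const α).pow 2).div_const 4).mul
      ((Real.continuous_exp.tendsto _).comp hprod.neg)
    have hval : α ^ 2 = (α + α) ^ 2 / 4 * Real.exp (-0) := by
      rw [neg_zero, Real.exp_zero]
      ring
    rw [hval]
    exact h
  refine hmain.congr' ?_
  filter_upwards [eventually_gt_atTop 0] with l hl
  have hJ : (1 - α^2)/4 - Jl l = (b l + α) * (b l - α) / 4 := by
    linear_combination (-1 / 4) * hsq l hl
  have hsplit : Real.exp (-((b l - α) * l)) = Real.exp (α * l) * Real.exp (-(b l * l)) := by
    rw [← Real.exp_add]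
    congr 1
    ring
  rw [hJ, hsplit]
  linear_combination (-(Real.exp (α * l) * (b l + α) / 4)) * hexp l hl


end
end
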